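/- Let (𝔰, ⟨·,·⟩) be a finite-dimensional real solvable Lie algebra endowed with an inner product, let 𝔫 = [𝔰,𝔰] and 𝔞 = 𝔫^⊥, and suppose the Ricci operator Ric = R − ½B − S(ad H) equals c·I for some real number c. Then [𝔞,𝔞] = 0, i.e. the corresponding Einstein solvmanifold is standard. -/

import Mathlib

/-!
Write `c` for the Einstein constant, `𝔞 = 𝔫ᗮ` and `S` for the symmetric part of `ad H`.

**Nonnegative constant.** For `a ∈ 𝔞` the Ricci equation reads `‖ad a + (ad a)†‖² = -4 c ‖a‖²`, so
`c ≥ 0` forces every `ad a` to be skew-symmetric. As `𝔫 ⊥ 𝔞`, this gives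
`‖[x, y]‖² = -⟨y, [x, [x, y]]⟩ = 0` for `x, y ∈ 𝔞` (`EinAlg.ricci_compl`,
`EinAlg.abelian_of_nonneg`).

**Negative constant, `c = -κ`.** By Lie's theorem `𝔫` acts nilpotently (`exists_chain`), so the
Killing form vanishes on `𝔫` (`EinAlg.killing_eq_zero`), and tracing the Ricci equation against
`ad H` gives `‖S‖² = κ tr ad H` (`EinAlg.trace_sym`). All that is needed afterwards are the facts
collected in `EinData` about the complexification `V` of `𝔫`: a nilpotent bracket `μ`, the
derivations `D α` given by an orthonormal basis of `𝔞`, the brackets `lam α β` of that basis, and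
the derivation `T` given by `H`. From here on `S` is the symmetric part of `T`. The goal is
`lam = 0` (`EinData.lam_eq_zero`).

*Optimal filtration.* A basis of `V` with real weights `e` defines a filtration (`Fil`). Among those
which are multiplicative for `μ` there is exactly one filtration that minimises `∑ (1 - pᵢ)²`
(`exists_isOpt`, `IsOpt.fil_eq`). Being unique, it is invariant under automorphisms and hence under
derivations (`IsOpt.der_mem`), so it consists of ideals and its weights are nonnegative
(`IsOpt.nonneg`). Optimality also gives `∑ pᵢ = ∑ pᵢ²`, and `∑ eᵢ ≤ |p| |e|` for every competing
`e` (`IsOpt.sum_eq`, `IsOpt.sum_le`). The real parts of the eigenvalues of the derivation `T` are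
such a competitor, and together with the trace inequality for `S` this yields `‖S‖ ≤ κ |p|`
(`exists_competitor`, `EinData.norm_le`).

*Rigidity.* Let `E` be the weight operator of an orthonormal basis adapted to the optimal
filtration. Pairing the Ricci equation with `E` turns its left side into a sum of terms that are
nonnegative because the filtration is invariant (`sum_mul_rho`), while the right side is
`4 (-κ |p|² + ⟨E, S⟩) ≤ 0` by the Cauchy–Schwarz inequality. Hence all terms vanish and `S = κ E`,
which means that `S` is a derivation of `μ`, commutes with the `D α` and kills the `lam α β`
(`EinData.rigid`).

*Conclusion.* If some `lam α β` were nonzero, `ker S` would be a nonzero nilpotent subalgebra, and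
the `D α`, which commute on its centre, would have a joint eigenvector `X` there. Put `A = μ X`.
Tracing the Ricci equation against `A A† - A† A` shows that `A†` is a derivation
(`EinData.adjoint_isDer`); then `A A†` is nilpotent, so `A = 0` (`eq_zero_of_adjoint_isDer`). Now the
Ricci form is nonnegative at `X` (`rho_nonneg`), whereas the Einstein equation gives it the value
`-κ ‖X‖² < 0` there.
-/

open scoped InnerProductSpace BigOperators

noncomputable section

variable {L : Type*} [NormedAddCommGroup L] [InnerProductSpace ℝ L] [FiniteDimensional ℝ L]

/-- The span of all brackets of elements of two submodules. -/
def bracketSpan (br : L →ₗ[ℝ] L →ₗ[ℝ] L) (A B : Submodule ℝ L) : Submodule ℝ L :=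
  Submodule.span ℝ {z | ∃ x ∈ A, ∃ y ∈ B, z = br x y}

/-- The derived series of the Lie algebra (L, br). -/
def derSeries (br : L →ₗ[ℝ] L →ₗ[ℝ] L) : ℕ → Submodule ℝ L
  | 0 => ⊤
  | k + 1 => bracketSpan br (derSeries br k) (derSeries br k)

namespace EinSolv
open Module

set_option linter.unusedSectionVars false

/-! ### Weight filtrations and adapted bases -/

section Filtration
variable {V : Type*} [AddCommGroup V] [Module ℂ V] {m : ℕ}

/-- The decreasing filtration of `V` attached to a basis `b` with real weights `e`: level `s` is
spanned by the basis vectors of weight at least `s`. -/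
def Fil (b : Basis (Fin m) ℂ V) (e : Fin m → ℝ) (s : ℝ) : Submodule ℂ V where
  carrier := {x | ∀ i, e i < s → b.repr x i = 0}
  add_mem' := by
    intro x y hx hy i hi
    simp [hx i hi, hy i hi]
  zero_mem' := by intro i _; simp
  smul_mem' := by
    intro c x hx i hi
    simp [hx i hi]

theorem mem_fil {b : Basis (Fin m) ℂ V} {e : Fin m → ℝ} {s : ℝ} {x : V} :
    x ∈ Fil b e s ↔ ∀ i, e i < s → b.repr x i = 0 := Iff.rfl

theorem fil_anti (b : Basis (Fin m) ℂ V) (e : Fin m → ℝ) {s t : ℝ} (h : s ≤ t) :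
    Fil b e t ≤ Fil b e s := fun _ hx i hi => hx i (hi.trans_le h)

theorem basis_mem_fil (b : Basis (Fin m) ℂ V) (e : Fin m → ℝ) (i : Fin m) :
    b i ∈ Fil b e (e i) := by
  intro j hj
  rw [Basis.repr_self, Finsupp.single_apply, if_neg]
  rintro rfl; exact lt_irrefl _ hj

theorem basis_mem_fil_iff (b : Basis (Fin m) ℂ V) (e : Fin m → ℝ) (i : Fin m) (s : ℝ) :
    b i ∈ Fil b e s ↔ s ≤ e i := by
  constructor
  · intro h
    by_contra! hlt
    have := h i hlt
    simp at this
  · intro h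
    exact fil_anti b e h (basis_mem_fil b e i)

/-- A nonzero vector has a value: the largest level containing it is the smallest weight that occurs
in its expansion. -/
theorem fil_val (b : Basis (Fin m) ℂ V) (e : Fin m → ℝ) {x : V} (hx : x ≠ 0) :
    ∃ i, b.repr x i ≠ 0 ∧ ∀ t, x ∈ Fil b e t ↔ t ≤ e i := by
  have hne : (b.repr x).support.Nonempty := by
    rw [Finsupp.support_nonempty_iff]
    simpa using hx
  obtain ⟨i, hi, hmin⟩ := Finset.exists_min_image _ e hne
  refine ⟨i, by simpa using hi, fun t => ⟨fun h => ?_, fun h j hj => ?_⟩⟩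
  · by_contra! hlt
    exact (by simpa using hi : b.repr x i ≠ 0) (h i hlt)
  · by_contra hne
    have := hmin j (by simpa using hne)
    linarith

/-- A level of the filtration is contained in any subspace containing its basis vectors. -/
theorem fil_induction (b : Basis (Fin m) ℂ V) (e : Fin m → ℝ) (s : ℝ) (W : Submodule ℂ V)
    (h : ∀ i, s ≤ e i → b i ∈ W) : Fil b e s ≤ W := by
  intro x hx
  rw [← b.sum_repr x]
  refine W.sum_mem fun i _ => ?_
  by_cases hi : s ≤ e i
  · exact W.smul_mem _ (h i hi)
  · rw [hx i (not_le.mp hi), zero_smul]; exact W.zero_mem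

/-- A nonzero subspace contains a vector of largest value. -/
theorem exists_max_val (b : Basis (Fin m) ℂ V) (e : Fin m → ℝ) (W : Submodule ℂ V) (hW : W ≠ ⊥) :
    ∃ x ∈ W, x ≠ 0 ∧ ∃ i, (∀ t, x ∈ Fil b e t ↔ t ≤ e i) ∧
      ∀ y ∈ W, y ≠ 0 → ∀ t, y ∈ Fil b e t → t ≤ e i := by
  classical
  let P : Finset (Fin m) := Finset.univ.filter
    fun i => ∃ x ∈ W, x ≠ 0 ∧ ∀ t, x ∈ Fil b e t ↔ t ≤ e i
  obtain ⟨z, hz, hz0⟩ := Submodule.exists_mem_ne_zero_of_ne_bot hW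
  have hP : P.Nonempty := by
    obtain ⟨i, _, hi⟩ := fil_val b e hz0
    exact ⟨i, by simpa [P] using ⟨z, hz, hz0, hi⟩⟩
  obtain ⟨i, hi, hmax⟩ := Finset.exists_max_image P e hP
  obtain ⟨x, hx, hx0, hxi⟩ := (Finset.mem_filter.mp hi).2
  refine ⟨x, hx, hx0, i, hxi, fun y hy hy0 t ht => ?_⟩
  obtain ⟨j, _, hj⟩ := fil_val b e hy0
  exact ((hj t).mp ht).trans (hmax j (by simpa [P] using ⟨y, hy, hy0, hj⟩))

theorem finrank_inf_ker [FiniteDimensional ℂ V] {n : ℕ} (W : Submodule ℂ V)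
    (hW : finrank ℂ W = n + 1)
    (φ : V →ₗ[ℂ] ℂ) {x : V} (hx : x ∈ W) (hφ : φ x ≠ 0) :
    finrank ℂ (W ⊓ LinearMap.ker φ : Submodule ℂ V) = n := by
  have h1 := LinearMap.finrank_range_add_finrank_ker (φ.domRestrict W)
  have h2 : LinearMap.range (φ.domRestrict W) = ⊤ := by
    apply LinearMap.range_eq_top.mpr
    apply LinearMap.surjective
    intro h
    exact hφ (by simpa using LinearMap.congr_fun h ⟨x, hx⟩)
  rw [h2, finrank_top, finrank_self, hW] at h1
  have h3 : finrank ℂ (LinearMap.ker (φ.domRestrict W)) =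
      finrank ℂ (W ⊓ LinearMap.ker φ : Submodule ℂ V) := by
    rw [← Submodule.map_comap_subtype, Submodule.finrank_map_subtype_eq]
    congr 1
  omega

/-- Families of vectors separated by a filtration: a linear combination lies in a level only if
all vectors occurring in it do. -/
def Adapted {n : ℕ} (F : ℝ → Submodule ℂ V) (v : Fin n → V) (e : Fin n → ℝ) : Prop :=
  (∀ i s, v i ∈ F s ↔ s ≤ e i) ∧
    ∀ (c : Fin n → ℂ) (s : ℝ), ∑ i, c i • v i ∈ F s → ∀ i, c i ≠ 0 → s ≤ e i

theorem Adapted.cons {n : ℕ} {F : ℝ → Submodule ℂ V} {v : Fin n → V} {e : Fin n → ℝ}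
    (h : Adapted F v e) {x : V} {r : ℝ} (hx : ∀ t, x ∈ F t ↔ t ≤ r)
    (hkey : ∀ (a : ℂ) (c : Fin n → ℂ) (t : ℝ), a ≠ 0 → a • x + ∑ i, c i • v i ∈ F t → t ≤ r) :
    Adapted F (Fin.cons x v : Fin (n+1) → V) (Fin.cons r e : Fin (n+1) → ℝ) := by
  refine ⟨?_, ?_⟩
  · intro i s
    refine Fin.cases ?_ (fun j => ?_) i
    · simpa using hx s
    · simpa using h.1 j s
  · intro c s hs i hi
    rw [Fin.sum_univ_succ] at hs
    simp only [Fin.cons_zero, Fin.cons_succ] at hs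
    by_cases h0 : c 0 = 0
    · rw [h0, zero_smul, zero_add] at hs
      revert hi
      refine Fin.cases ?_ (fun j => ?_) i
      · intro hi; exact absurd h0 hi
      · intro hj
        simpa using h.2 _ s hs j hj
    · have hr : s ≤ r := hkey _ _ s h0 hs
      have h2 : ∑ j : Fin n, c j.succ • v j ∈ F s := by
        have := (F s).sub_mem hs ((F s).smul_mem (c 0) ((hx s).mpr hr))
        simpa using this
      revert hi
      refine Fin.cases ?_ (fun j => ?_) i
      · intro _; simpa using hr
      · intro hj
        simpa using h.2 _ s h2 j hj

/-- Every subspace has a basis adapted to two given filtrations. The induction splits off a vector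
`x` of maximal value for the first filtration and continues in a hyperplane not containing `x`,
chosen so that adding elements of it to `x` cannot increase the second value. -/
theorem exists_common_adapted [FiniteDimensional ℂ V] (b b' : Basis (Fin m) ℂ V)
    (e e' : Fin m → ℝ) (n : ℕ) :
    ∀ W : Submodule ℂ V, finrank ℂ W = n → ∃ (v : Fin n → V) (e1 e2 : Fin n → ℝ),
      (∀ i, v i ∈ W) ∧ Adapted (Fil b e) v e1 ∧ Adapted (Fil b' e') v e2 := by
  induction n with
  | zero =>
    intro W _
    exact ⟨Fin.elim0, Fin.elim0, Fin.elim0, fun i => i.elim0,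
      ⟨fun i => i.elim0, fun _ _ _ i => i.elim0⟩, ⟨fun i => i.elim0, fun _ _ _ i => i.elim0⟩⟩
  | succ n ih =>
    intro W hW
    have hWb : W ≠ ⊥ := by
      rintro rfl; simp at hW
    -- `x` has maximal value for the first filtration; the hyperplane where its `j`-th coordinate vanishes contains
    -- all vectors whose value for the second filtration exceeds that of `x`
    obtain ⟨x, hxW, hx0, i, hxi, hmax⟩ := exists_max_val b e W hWb
    obtain ⟨j, hj0, hxj⟩ := fil_val b' e' hx0
    obtain ⟨v, e1, e2, hv, h1, h2⟩ :=
      ih (W ⊓ LinearMap.ker (b'.coord j)) (finrank_inf_ker W hW (b'.coord j) hxW (by simpa using hj0))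
    have hφ : ∀ (a : ℂ) (c : Fin n → ℂ), b'.coord j (a • x + ∑ k, c k • v k) =
        a * b'.repr x j := by
      intro a c
      rw [map_add, map_smul, map_sum, Finset.sum_eq_zero]
      · simp
      · intro k _
        rw [map_smul, (LinearMap.mem_ker.mp (hv k).2 : b'.coord j (v k) = 0), smul_zero]
    refine ⟨Fin.cons x v, Fin.cons (e i) e1, Fin.cons (e' j) e2, ?_, h1.cons hxi ?_, h2.cons hxj ?_⟩
    · intro k
      refine Fin.cases ?_ (fun l => ?_) k
      · simpa using hxW
      · simpa using (hv l).1
    · intro a c t ha ht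
      refine hmax _ (W.add_mem (W.smul_mem _ hxW) (W.sum_mem fun k _ => W.smul_mem _ (hv k).1)) ?_ t ht
      intro h0
      have := hφ a c
      rw [h0, map_zero] at this
      exact mul_ne_zero ha hj0 this.symm
    · intro a c t ha ht
      by_contra! hlt
      have h3 : b'.coord j (a • x + ∑ k, c k • v k) = 0 := by
        simpa only [Basis.coord_apply] using ht j hlt
      rw [hφ] at h3
      exact mul_ne_zero ha hj0 h3

theorem Adapted.linearIndependent {b : Basis (Fin m) ℂ V} {e : Fin m → ℝ} {n : ℕ} {v : Fin n → V}
    {e1 : Fin n → ℝ} (h : Adapted (Fil b e) v e1) : LinearIndependent ℂ v := by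
  rw [Fintype.linearIndependent_iff]
  intro c hc i
  by_contra hi
  have := h.2 c (e1 i + 1) (by rw [hc]; exact Submodule.zero_mem _) i hi
  linarith

theorem Adapted.fil_eq {b : Basis (Fin m) ℂ V} {e : Fin m → ℝ} {v : Basis (Fin m) ℂ V}
    {e1 : Fin m → ℝ} (h : Adapted (Fil b e) v e1) : Fil v e1 = Fil b e := by
  funext s
  apply le_antisymm
  · exact fil_induction _ _ _ _ fun i hi => (h.1 i s).mpr hi
  · intro x hx i hi
    by_contra hne
    have := h.2 (fun i => v.repr x i) s (by rw [v.sum_repr]; exact hx) i hne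
    linarith

/-- Two filtrations coming from weighted bases come from a common basis. -/
theorem exists_common_basis [FiniteDimensional ℂ V] (b b' : Basis (Fin m) ℂ V)
    (e e' : Fin m → ℝ) : ∃ (v : Basis (Fin m) ℂ V) (e1 e2 : Fin m → ℝ),
      Fil v e1 = Fil b e ∧ Fil v e2 = Fil b' e' := by
  have hm : finrank ℂ V = m := by simpa using finrank_eq_card_basis b
  obtain ⟨v, e1, e2, -, h1, h2⟩ := exists_common_adapted b b' e e' m ⊤ (by rw [finrank_top, hm])
  let w : Basis (Fin m) ℂ V := basisOfLinearIndependentOfCardEqFinrank' v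
    h1.linearIndependent (by simp [hm])
  have hw : (w : Fin m → V) = v := by simp [w]
  exact ⟨w, e1, e2, Adapted.fil_eq (hw ▸ h1), Adapted.fil_eq (hw ▸ h2)⟩

/-- The transition matrix between two bases is invertible, so some permutation picks out
nonzero entries. -/
theorem exists_perm_le (b b' : Basis (Fin m) ℂ V) (e e' : Fin m → ℝ)
    (h : ∀ s, Fil b' e' s ≤ Fil b e s) : ∃ σ : Equiv.Perm (Fin m), ∀ j, e' j ≤ e (σ j) := by
  have hdet : (b.toMatrix b').det ≠ 0 := by
    have h1 := b.toMatrix_mul_toMatrix_flip b'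
    intro h0
    have := congrArg Matrix.det h1
    rw [Matrix.det_mul, h0, zero_mul, Matrix.det_one] at this
    exact zero_ne_one this
  rw [Matrix.det_apply] at hdet
  obtain ⟨σ, -, hσ⟩ := Finset.exists_ne_zero_of_sum_ne_zero hdet
  refine ⟨σ, fun j => ?_⟩
  have h2 : ∏ i, b.toMatrix b' (σ i) i ≠ 0 := by
    intro h0; rw [h0, smul_zero] at hσ; exact hσ rfl
  have h3 := Finset.prod_ne_zero_iff.mp h2 j (Finset.mem_univ _)
  by_contra! hlt
  exact h3 (h _ (basis_mem_fil b' e' j) _ hlt)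

theorem exists_perm_eq (b b' : Basis (Fin m) ℂ V) (e e' : Fin m → ℝ)
    (h : Fil b e = Fil b' e') : ∃ σ : Equiv.Perm (Fin m), ∀ j, e' j = e (σ j) := by
  obtain ⟨σ, hσ⟩ := exists_perm_le b b' e e' (fun s => by rw [h])
  obtain ⟨τ, hτ⟩ := exists_perm_le b' b e' e (fun s => by rw [h])
  refine ⟨σ, fun j => ?_⟩
  have h1 : ∑ j, e (σ j) = ∑ j, e j := Equiv.sum_comp σ e
  have h2 : ∑ j, e' (τ j) = ∑ j, e' j := Equiv.sum_comp τ e'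
  have h3 : ∑ j, e j ≤ ∑ j, e' (τ j) := Finset.sum_le_sum fun j _ => hτ j
  have h4 : ∑ j, e' j = ∑ j, e (σ j) :=
    le_antisymm (Finset.sum_le_sum fun j _ => hσ j) (by linarith)
  exact (Finset.sum_eq_sum_iff_of_le fun j _ => hσ j).mp h4 j (Finset.mem_univ _)

/-- The filtration determines the weights with their multiplicities. -/
theorem sum_weights_eq (b b' : Basis (Fin m) ℂ V) (e e' : Fin m → ℝ)
    (h : Fil b e = Fil b' e') (g : ℝ → ℝ) : ∑ i, g (e i) = ∑ i, g (e' i) := by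
  obtain ⟨σ, hσ⟩ := exists_perm_eq b b' e e' h
  simp only [hσ]
  exact (Equiv.sum_comp σ fun i => g (e i)).symm

end Filtration

section Ortho
variable {V : Type*} [NormedAddCommGroup V] [InnerProductSpace ℂ V] [FiniteDimensional ℂ V] {m : ℕ}

/-- Every subspace has an orthonormal basis adapted to a given filtration: a unit vector of
maximal value is split off and the induction continues in its orthogonal complement. -/
theorem exists_ortho_adapted (b : Basis (Fin m) ℂ V) (e : Fin m → ℝ) (n : ℕ) :
    ∀ W : Submodule ℂ V, finrank ℂ W = n → ∃ (v : Fin n → V) (e1 : Fin n → ℝ),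
      (∀ i, v i ∈ W) ∧ Adapted (Fil b e) v e1 ∧ Orthonormal ℂ v := by
  induction n with
  | zero =>
    intro W _
    exact ⟨Fin.elim0, Fin.elim0, fun i => i.elim0,
      ⟨fun i => i.elim0, fun _ _ _ i => i.elim0⟩, ⟨fun i => i.elim0, fun i => i.elim0⟩⟩
  | succ n ih =>
    intro W hW
    have hWb : W ≠ ⊥ := by
      rintro rfl; simp at hW
    obtain ⟨x', hxW', hx0', i, hxi', hmax⟩ := exists_max_val b e W hWb
    have hn0 : ((‖x'‖ : ℂ)⁻¹) ≠ 0 := inv_ne_zero (by simpa using hx0')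
    obtain ⟨x, hxW, hx1, hxi⟩ : ∃ x ∈ W, ‖x‖ = 1 ∧ ∀ t, x ∈ Fil b e t ↔ t ≤ e i := by
      refine ⟨((‖x'‖ : ℂ)⁻¹) • x', W.smul_mem _ hxW', norm_smul_inv_norm hx0', fun t => ?_⟩
      rw [Submodule.smul_mem_iff _ hn0]
      exact hxi' t
    have hxx : ⟪x, x⟫_ℂ = 1 := by
      rw [inner_self_eq_norm_sq_to_K, hx1]; simp
    obtain ⟨v, e1, hv, h1, h2⟩ :=
      ih (W ⊓ LinearMap.ker (innerₛₗ ℂ x)) (finrank_inf_ker W hW (innerₛₗ ℂ x) hxW (by rw [innerₛₗ_apply_apply, hxx]; exact one_ne_zero))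
    have hxv : ∀ k, ⟪x, v k⟫_ℂ = 0 := fun k => by simpa using LinearMap.mem_ker.mp (hv k).2
    refine ⟨Fin.cons x v, Fin.cons (e i) e1, ?_, h1.cons hxi ?_, ?_⟩
    · intro k
      refine Fin.cases ?_ (fun l => ?_) k
      · simpa using hxW
      · simpa using (hv l).1
    · intro a c t ha ht
      refine hmax _ (W.add_mem (W.smul_mem _ hxW) (W.sum_mem fun k _ => W.smul_mem _ (hv k).1)) ?_ t ht
      intro h0
      have h3 : ⟪x, a • x + ∑ k, c k • v k⟫_ℂ = a := by
        simp [hxv, hx1]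
      rw [h0, inner_zero_right] at h3
      exact ha h3.symm
    · refine ⟨fun k => ?_, fun k l => ?_⟩
      · refine Fin.cases ?_ (fun l => ?_) k
        · simpa using hx1
        · simpa using h2.1 l
      · refine Fin.cases ?_ (fun k => ?_) k <;> refine Fin.cases ?_ (fun l => ?_) l
        · simp
        · intro _; simpa using hxv l
        · intro _; simpa [inner_eq_zero_symm] using hxv k
        · intro h
          simpa using h2.2 (fun hab => h (by rw [hab]))

/-- Gram–Schmidt: every weighted basis has the filtration of a weighted orthonormal basis. -/
theorem exists_ortho_basis (b : Basis (Fin m) ℂ V) (e : Fin m → ℝ) :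
    ∃ (v : OrthonormalBasis (Fin m) ℂ V) (e1 : Fin m → ℝ), Fil v.toBasis e1 = Fil b e := by
  have hm : finrank ℂ V = m := by simpa using finrank_eq_card_basis b
  obtain ⟨v, e1, -, h1, h2⟩ := exists_ortho_adapted b e m ⊤ (by rw [finrank_top, hm])
  let w : Basis (Fin m) ℂ V := basisOfLinearIndependentOfCardEqFinrank' v
    h1.linearIndependent (by simp [hm])
  have hw : (w : Fin m → V) = v := by simp [w]
  have how : Orthonormal ℂ w := hw ▸ h2
  refine ⟨w.toOrthonormalBasis how, e1, Adapted.fil_eq ?_⟩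
  have : (w.toOrthonormalBasis how).toBasis = w := by simp
  rw [this, hw]
  exact h1

end Ortho

/-! ### Optimal gradings -/

section Optimal
variable {V : Type*} [AddCommGroup V] [Module ℂ V] {m : ℕ}

/-- The filtration of a weighted basis is multiplicative for the product `μ`. -/
def Compat (μ : V →ₗ[ℂ] V →ₗ[ℂ] V) (b : Basis (Fin m) ℂ V) (e : Fin m → ℝ) : Prop :=
  ∀ s t x y, x ∈ Fil b e s → y ∈ Fil b e t → μ x y ∈ Fil b e (s + t)

theorem compat_congr {μ : V →ₗ[ℂ] V →ₗ[ℂ] V} {b b' : Basis (Fin m) ℂ V} {e e' : Fin m → ℝ}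
    (h : Fil b e = Fil b' e') (hc : Compat μ b e) : Compat μ b' e' := by
  intro s t x y hx hy
  rw [← h] at hx hy ⊢
  exact hc s t x y hx hy

/-- For a fixed basis, compatibility is a finite system of linear inequalities on the weights, which
depends only on the support of the structure constants. -/
theorem compat_iff {μ : V →ₗ[ℂ] V →ₗ[ℂ] V} {b : Basis (Fin m) ℂ V} {e : Fin m → ℝ} :
    Compat μ b e ↔ ∀ i j k, b.repr (μ (b i) (b j)) k ≠ 0 → e i + e j ≤ e k := by
  constructor
  · intro h i j k hk
    by_contra! hlt
    exact hk (h _ _ _ _ (basis_mem_fil b e i) (basis_mem_fil b e j) k hlt)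
  · intro h s t x y hx hy
    have hbb : ∀ i j, s ≤ e i → t ≤ e j → μ (b i) (b j) ∈ Fil b e (s + t) := by
      intro i j hi hj k hk
      by_contra hne
      have := h i j k hne
      linarith
    have h1 : ∀ i, s ≤ e i → μ (b i) y ∈ Fil b e (s + t) := fun i hi =>
      (fil_induction b e t ((Fil b e (s + t)).comap (μ (b i))) fun j hj => hbb i j hi hj) hy
    exact (fil_induction b e s ((Fil b e (s + t)).comap (μ.flip y)) fun i hi => h1 i hi) hx

/-- An optimal weighted basis: one with multiplicative filtration whose weight vector is as close
as possible to `(1, …, 1)`. -/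
def IsOpt (μ : V →ₗ[ℂ] V →ₗ[ℂ] V) (b : Basis (Fin m) ℂ V) (p : Fin m → ℝ) : Prop :=
  Compat μ b p ∧ ∀ (b' : Basis (Fin m) ℂ V) (e : Fin m → ℝ), Compat μ b' e →
    ∑ i, (1 - p i) ^ 2 ≤ ∑ i, (1 - e i) ^ 2

theorem isOpt_congr {μ : V →ₗ[ℂ] V →ₗ[ℂ] V} {b b' : Basis (Fin m) ℂ V} {e e' : Fin m → ℝ}
    (h : Fil b e = Fil b' e') (hc : IsOpt μ b e) : IsOpt μ b' e' := by
  refine ⟨compat_congr h hc.1, fun b'' e'' hc2 => ?_⟩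
  rw [← sum_weights_eq b b' e e' h (fun x => (1 - x) ^ 2)]
  exact hc.2 _ _ hc2

/-- Optimal weighted bases exist although bases vary in a noncompact family: the compatible weight
vectors form a finite union of closed cones, one for each support of the structure constants. -/
theorem exists_isOpt (μ : V →ₗ[ℂ] V →ₗ[ℂ] V) (b₀ : Basis (Fin m) ℂ V) :
    ∃ (b : Basis (Fin m) ℂ V) (p : Fin m → ℝ), IsOpt μ b p := by
  classical
  -- compatibility depends on `b` only through the finite set of nonzero structure constants
  let C : Finset (Fin m × Fin m × Fin m) → Set (EuclideanSpace ℝ (Fin m)) := fun T =>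
    {e | ∀ x ∈ T, e x.1 + e x.2.1 ≤ e x.2.2}
  let supp : Basis (Fin m) ℂ V → Finset (Fin m × Fin m × Fin m) := fun b =>
    Finset.univ.filter fun x => b.repr (μ (b x.1) (b x.2.1)) x.2.2 ≠ 0
  have hsupp : ∀ b (e : EuclideanSpace ℝ (Fin m)), e ∈ C (supp b) ↔ Compat μ b e := by
    intro b e
    rw [compat_iff]
    constructor
    · intro h i j k hk
      exact h (i, j, k) (by simpa [supp] using hk)
    · rintro h ⟨i, j, k⟩ hx
      exact h i j k (by simpa [supp] using hx)
  let S : Set (EuclideanSpace ℝ (Fin m)) := ⋃ T ∈ Set.range supp, C T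
  have hS : IsClosed S := by
    refine Set.Finite.isClosed_biUnion (Set.toFinite _) fun T _ => ?_
    have : C T = ⋂ x ∈ T, {e | e x.1 + e x.2.1 ≤ e x.2.2} := by
      ext e; simp [C]
    rw [this]
    refine isClosed_biInter fun x _ => isClosed_le ?_ ?_ <;> fun_prop
  have hne : S.Nonempty := by
    refine ⟨0, ?_⟩
    simp only [S, Set.mem_iUnion]
    refine ⟨supp b₀, ⟨b₀, rfl⟩, ?_⟩
    intro x _; simp
  obtain ⟨p, hpS, hp⟩ := hS.exists_infDist_eq_dist hne (WithLp.toLp 2 fun _ => (1 : ℝ))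
  simp only [S, Set.mem_iUnion] at hpS
  obtain ⟨_, ⟨b, rfl⟩, hpb⟩ := hpS
  refine ⟨b, p, (hsupp b p).mp hpb, fun b' e he => ?_⟩
  have hd : ∀ f : EuclideanSpace ℝ (Fin m),
      dist (WithLp.toLp 2 fun _ => (1 : ℝ)) f ^ 2 = ∑ i, (1 - f i) ^ 2 := by
    intro f
    rw [EuclideanSpace.dist_eq, Real.sq_sqrt (Finset.sum_nonneg fun i _ => sq_nonneg _)]
    exact Finset.sum_congr rfl fun i _ => by rw [Real.dist_eq, sq_abs]
  have heS : WithLp.toLp 2 e ∈ S := by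
    simp only [S, Set.mem_iUnion]
    exact ⟨supp b', ⟨b', rfl⟩, (hsupp b' _).mpr he⟩
  have h1 := hp ▸ Metric.infDist_le_dist_of_mem heS
  have h2 := pow_le_pow_left₀ dist_nonneg h1 2
  rw [hd, hd] at h2
  exact h2

theorem compat_smul {μ : V →ₗ[ℂ] V →ₗ[ℂ] V} {b : Basis (Fin m) ℂ V} {e : Fin m → ℝ}
    (h : Compat μ b e) {t : ℝ} (ht : 0 ≤ t) : Compat μ b (fun i => t * e i) := by
  rw [compat_iff] at h ⊢
  intro i j k hk
  have := mul_le_mul_of_nonneg_left (h i j k hk) ht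
  linarith

theorem sum_one_sub_sq (e : Fin m → ℝ) (t : ℝ) :
    ∑ i, (1 - t * e i) ^ 2 = m - 2 * t * ∑ i, e i + t ^ 2 * ∑ i, e i ^ 2 := by
  have : ∀ i, (1 - t * e i) ^ 2 = 1 - 2 * t * e i + t ^ 2 * e i ^ 2 := fun i => by ring
  simp only [this, Finset.sum_add_distrib, Finset.sum_sub_distrib, Finset.mul_sum]
  simp

theorem IsOpt.ineq {μ : V →ₗ[ℂ] V →ₗ[ℂ] V} {b b' : Basis (Fin m) ℂ V} {p e : Fin m → ℝ}
    (h : IsOpt μ b p) (he : Compat μ b' e) {t : ℝ} (ht : 0 ≤ t) :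
    -2 * ∑ i, p i + ∑ i, p i ^ 2 ≤ -2 * t * ∑ i, e i + t ^ 2 * ∑ i, e i ^ 2 := by
  have h1 := h.2 b' _ (compat_smul he ht)
  have h2 := sum_one_sub_sq p 1
  rw [sum_one_sub_sq] at h1
  simp only [one_mul] at h2
  rw [h2] at h1
  linarith

/-- Optimality along the ray through `p`. -/
theorem IsOpt.sum_eq {μ : V →ₗ[ℂ] V →ₗ[ℂ] V} {b : Basis (Fin m) ℂ V} {p : Fin m → ℝ}
    (h : IsOpt μ b p) : ∑ i, p i = ∑ i, p i ^ 2 := by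
  set P := ∑ i, p i
  set Q := ∑ i, p i ^ 2 with hQ
  have hQ0 : 0 ≤ Q := Finset.sum_nonneg fun i _ => sq_nonneg _
  have key : ∀ t : ℝ, 0 ≤ t → -2 * P + Q ≤ -2 * t * P + t ^ 2 * Q := fun t ht => h.ineq h.1 ht
  rcases hQ0.eq_or_lt with h0 | hpos
  · have hp : ∀ i, p i = 0 := by
      intro i
      have := (Finset.sum_eq_zero_iff_of_nonneg fun i _ => sq_nonneg (p i)).mp h0.symm i
        (Finset.mem_univ _)
      simpa using this
    rw [← h0]
    exact Finset.sum_eq_zero fun i _ => hp i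
  · have h1 := key 0 le_rfl
    have hP : 0 < P := by nlinarith
    have h2 := key (P / Q) (by positivity)
    have h3 : -2 * (P / Q) * P + (P / Q) ^ 2 * Q = -(P ^ 2 / Q) := by field_simp; ring
    rw [h3] at h2
    have h4 : (P - Q) ^ 2 / Q ≤ 0 := by
      have : (P - Q) ^ 2 / Q = P ^ 2 / Q - 2 * P + Q := by field_simp; ring
      linarith
    have h5 : (P - Q) ^ 2 ≤ 0 := by
      by_contra! hlt
      have := div_pos hlt hpos
      linarith
    nlinarith

/-- Optimality against the ray through a competing weight vector `e`: the functional `∑ eᵢ` is at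
most `|p| |e|`. -/
theorem IsOpt.sum_le {μ : V →ₗ[ℂ] V →ₗ[ℂ] V} {b b' : Basis (Fin m) ℂ V} {p e : Fin m → ℝ}
    (h : IsOpt μ b p) (he : Compat μ b' e) :
    ∑ i, e i ≤ √(∑ i, p i ^ 2) * √(∑ i, e i ^ 2) := by
  have hs := h.sum_eq
  set Q := ∑ i, p i ^ 2
  have hQ0 : 0 ≤ Q := Finset.sum_nonneg fun i _ => sq_nonneg _
  have hR0 : 0 ≤ ∑ i, e i ^ 2 := Finset.sum_nonneg fun i _ => sq_nonneg _
  rw [← Real.sqrt_mul hQ0]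
  rcases le_or_gt (∑ i, e i) 0 with h0 | hpos
  · exact h0.trans (Real.sqrt_nonneg _)
  rcases hR0.eq_or_lt with h1 | hR
  · have : ∑ i, e i = 0 := Finset.sum_eq_zero fun i _ => by
      simpa using (Finset.sum_eq_zero_iff_of_nonneg fun i _ => sq_nonneg (e i)).mp h1.symm i
        (Finset.mem_univ _)
    linarith
  apply Real.le_sqrt_of_sq_le
  have h2 := h.ineq he (t := (∑ i, e i) / ∑ i, e i ^ 2) (by positivity)
  set E := ∑ i, e i
  set R := ∑ i, e i ^ 2
  have h3 : -2 * (E / R) * E + (E / R) ^ 2 * R = -(E ^ 2 / R) := by field_simp; ring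
  rw [h3, hs] at h2
  have h4 : E ^ 2 / R ≤ Q := by linarith
  rwa [div_le_iff₀ hR] at h4

/-- Uniqueness of the optimal filtration, by strict convexity along a common basis. -/
theorem IsOpt.fil_eq [FiniteDimensional ℂ V] {μ : V →ₗ[ℂ] V →ₗ[ℂ] V} {b b' : Basis (Fin m) ℂ V}
    {p p' : Fin m → ℝ} (h : IsOpt μ b p) (h' : IsOpt μ b' p') : Fil b p = Fil b' p' := by
  obtain ⟨v, e1, e2, h1, h2⟩ := exists_common_basis b b' p p'
  have o1 := isOpt_congr h1.symm h
  have o2 := isOpt_congr h2.symm h'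
  have hmid : Compat μ v (fun i => (e1 i + e2 i) / 2) := by
    have c1 := compat_iff.mp o1.1
    have c2 := compat_iff.mp o2.1
    rw [compat_iff]
    intro i j k hk
    have := c1 i j k hk
    have := c2 i j k hk
    linarith
  have k1 := o1.2 v _ hmid
  have k2 := o2.2 v _ hmid
  have hid : ∑ i, (e1 i - e2 i) ^ 2 = 2 * ∑ i, (1 - e1 i) ^ 2 + 2 * ∑ i, (1 - e2 i) ^ 2
      - 4 * ∑ i, (1 - (e1 i + e2 i) / 2) ^ 2 := by
    simp only [Finset.mul_sum, ← Finset.sum_add_distrib, ← Finset.sum_sub_distrib]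
    exact Finset.sum_congr rfl fun i _ => by ring
  have hz : ∑ i, (e1 i - e2 i) ^ 2 = 0 :=
    le_antisymm (by linarith) (Finset.sum_nonneg fun i _ => sq_nonneg _)
  have : e1 = e2 := by
    funext i
    have := (Finset.sum_eq_zero_iff_of_nonneg fun i _ => sq_nonneg (e1 i - e2 i)).mp hz i
      (Finset.mem_univ _)
    have := pow_eq_zero_iff (two_ne_zero) |>.mp this
    linarith
  rw [← h1, ← h2, this]

/-- Automorphisms preserve the optimal filtration, since they transport it to another optimal one. -/
theorem IsOpt.map_mem [FiniteDimensional ℂ V] {μ : V →ₗ[ℂ] V →ₗ[ℂ] V} {b : Basis (Fin m) ℂ V}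
    {p : Fin m → ℝ} (h : IsOpt μ b p) (φ : V ≃ₗ[ℂ] V) (hφ : ∀ x y, φ (μ x y) = μ (φ x) (φ y))
    {s : ℝ} {x : V} (hx : x ∈ Fil b p s) : φ x ∈ Fil b p s := by
  have hfil : ∀ t y, y ∈ Fil (b.map φ) p t ↔ φ.symm y ∈ Fil b p t := by
    intro t y
    simp only [mem_fil, Basis.map_repr, LinearEquiv.trans_apply]
  have hopt : IsOpt μ (b.map φ) p := by
    refine ⟨fun s t x y hx hy => ?_, h.2⟩
    rw [hfil] at hx hy ⊢
    have : φ.symm (μ x y) = μ (φ.symm x) (φ.symm y) := by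
      rw [LinearEquiv.symm_apply_eq, hφ]; simp
    rw [this]
    exact h.1 _ _ _ _ hx hy
  rw [h.fil_eq hopt, hfil]
  simpa using hx

/-- `D` is a derivation of the product `μ`. -/
def IsDer (μ : V →ₗ[ℂ] V →ₗ[ℂ] V) (D : V →ₗ[ℂ] V) : Prop :=
  ∀ x y, D (μ x y) = μ (D x) y + μ x (D y)

/-- If the optimal filtration consists of ideals, its weights are nonnegative: cutting the
weights off at `0` is compatible and moves them closer to `1`. -/
theorem IsOpt.nonneg {μ : V →ₗ[ℂ] V →ₗ[ℂ] V} {b : Basis (Fin m) ℂ V}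
    {p : Fin m → ℝ} (h : IsOpt μ b p) (hskew : ∀ x y, μ x y = - μ y x)
    (hideal : ∀ x s y, y ∈ Fil b p s → μ x y ∈ Fil b p s) (i : Fin m) : 0 ≤ p i := by
  have hc : Compat μ b (fun i => max (p i) 0) := by
    rw [compat_iff]
    intro i j k hk
    have h1 := compat_iff.mp h.1 i j k hk
    have h2 : p j ≤ p k := by
      by_contra! hlt
      exact hk (hideal (b i) _ _ (basis_mem_fil b p j) k hlt)
    have h3 : p i ≤ p k := by
      by_contra! hlt
      refine hk ?_
      rw [hskew]
      exact Submodule.neg_mem _ (hideal (b j) _ _ (basis_mem_fil b p i)) k hlt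
    rcases le_total (p i) 0 with hi | hi <;> rcases le_total (p j) 0 with hj | hj <;>
      simp [hi, hj, h1, h2, h3]
  have h1 := h.2 b _ hc
  have hle : ∀ i, (1 - max (p i) 0) ^ 2 ≤ (1 - p i) ^ 2 := by
    intro i
    rcases le_total (p i) 0 with hi | hi
    · rw [max_eq_right hi]; nlinarith
    · rw [max_eq_left hi]
  have h2 := (Finset.sum_eq_sum_iff_of_le fun i _ => hle i).mp
    (le_antisymm (Finset.sum_le_sum fun i _ => hle i) h1) i (Finset.mem_univ _)
  by_contra! hlt
  rw [max_eq_right hlt.le] at h2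
  nlinarith

end Optimal

section ExpDer
variable {V : Type*} [NormedAddCommGroup V] [InnerProductSpace ℂ V] [FiniteDimensional ℂ V] {m : ℕ}

theorem hasDerivAt_exp_apply (A : V →L[ℂ] V) {f : ℝ → V} {f' : V} {t : ℝ} (hf : HasDerivAt f f' t) :
    HasDerivAt (fun u : ℝ => NormedSpace.exp (u • A) (f u))
      (A (NormedSpace.exp (t • A) (f t)) + NormedSpace.exp (t • A) f') t := by
  have h1 : HasDerivAt (fun u : ℝ => NormedSpace.exp (u • A)) (A * NormedSpace.exp (t • A)) t :=
    hasDerivAt_exp_smul_const' A t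
  have h2 := (ContinuousLinearMap.restrictScalarsL ℂ V V ℝ ℝ).hasFDerivAt.comp_hasDerivAt t h1
  exact h2.clm_apply hf

/-- One-parameter groups of derivations consist of automorphisms. -/
theorem exp_der_map (μ : V →ₗ[ℂ] V →ₗ[ℂ] V) (D : V →ₗ[ℂ] V) (hD : IsDer μ D) (t : ℝ) (x y : V) :
    NormedSpace.exp (t • LinearMap.toContinuousLinearMap D) (μ x y) =
      μ (NormedSpace.exp (t • LinearMap.toContinuousLinearMap D) x)
        (NormedSpace.exp (t • LinearMap.toContinuousLinearMap D) y) := by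
  set A := LinearMap.toContinuousLinearMap D with hA
  let _ : NormedAlgebra ℚ (V →L[ℂ] V) := NormedAlgebra.restrictScalars ℚ ℂ _
  let M : V →L[ℝ] V →L[ℝ] V := LinearMap.toContinuousLinearMap
    ((LinearMap.toContinuousLinearMap (𝕜 := ℝ) (E := V) (F' := V)).toLinearMap ∘ₗ
      (LinearMap.restrictScalarsₗ ℝ ℂ V V ℝ ∘ₗ μ.restrictScalars ℝ))
  have hM : ∀ x y, M x y = μ x y := fun x y => rfl
  let f : ℝ → V := fun u => NormedSpace.exp (u • (-A))
    (M (NormedSpace.exp (u • A) x) (NormedSpace.exp (u • A) y))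
  have hx : ∀ (z : V) u, HasDerivAt (fun u : ℝ => NormedSpace.exp (u • A) z)
      (A (NormedSpace.exp (u • A) z)) u := by
    intro z u
    simpa using hasDerivAt_exp_apply A (hasDerivAt_const u z)
  have hf : ∀ u, HasDerivAt f 0 u := by
    intro u
    have h1 := (M.hasFDerivAt.comp_hasDerivAt u (hx x u)).clm_apply (hx y u)
    have h2 : HasDerivAt f _ u := hasDerivAt_exp_apply (-A) h1
    refine h2.congr_deriv ?_
    have hcomm : ∀ z, A (NormedSpace.exp (u • (-A)) z) = NormedSpace.exp (u • (-A)) (A z) := by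
      intro z
      have : Commute A (NormedSpace.exp (u • (-A))) :=
        (((Commute.refl A).neg_right).smul_right u).exp_right
      exact congrArg (fun T : V →L[ℂ] V => T z) this.eq
    have hder : A (M (NormedSpace.exp (u • A) x) (NormedSpace.exp (u • A) y)) =
        M (A (NormedSpace.exp (u • A) x)) (NormedSpace.exp (u • A) y) +
          M (NormedSpace.exp (u • A) x) (A (NormedSpace.exp (u • A) y)) := by
      simp only [hM]; exact hD _ _
    rw [neg_apply, hcomm, ← map_neg, ← map_add]
    simp only [Function.comp_apply]
    rw [hder]
    convert (NormedSpace.exp (u • (-A))).map_zero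
    abel
  have hconst : f t = f 0 := is_const_of_deriv_eq_zero (fun u => (hf u).differentiableAt)
    (fun u => (hf u).deriv) t 0
  have h0 : f 0 = μ x y := by simp [f, hM]
  have hinv : ∀ z, NormedSpace.exp (t • A) (NormedSpace.exp (t • (-A)) z) = z := by
    intro z
    have : NormedSpace.exp (t • A) * NormedSpace.exp (t • (-A)) = 1 := by
      rw [← NormedSpace.exp_add_of_commute (by
        exact (((Commute.refl A).neg_right).smul_right t).smul_left t)]
      simp
    exact congrArg (fun T : V →L[ℂ] V => T z) this
  rw [← h0, ← hconst]
  simp only [f]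
  rw [hinv]
  rfl

/-- Derivations preserve the optimal filtration. -/
theorem IsOpt.der_mem {μ : V →ₗ[ℂ] V →ₗ[ℂ] V} {b : Basis (Fin m) ℂ V}
    {p : Fin m → ℝ} (h : IsOpt μ b p) {D : V →ₗ[ℂ] V} (hD : IsDer μ D)
    {s : ℝ} {x : V} (hx : x ∈ Fil b p s) : D x ∈ Fil b p s := by
  set A := LinearMap.toContinuousLinearMap D with hA
  let _ : NormedAlgebra ℚ (V →L[ℂ] V) := NormedAlgebra.restrictScalars ℚ ℂ _
  have hmem : ∀ t : ℝ, NormedSpace.exp (t • A) x ∈ Fil b p s := by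
    intro t
    have hinv : ∀ r : ℝ, NormedSpace.exp (r • A) * NormedSpace.exp ((-r) • A) = 1 := by
      intro r
      rw [← NormedSpace.exp_add_of_commute (by
        exact ((Commute.refl A).smul_right _).smul_left r)]
      simp
    let φ : V ≃ₗ[ℂ] V := LinearEquiv.ofLinearMap (NormedSpace.exp (t • A) : V →L[ℂ] V).toLinearMap
      (NormedSpace.exp ((-t) • A) : V →L[ℂ] V).toLinearMap
      (by
        ext z
        exact congrArg (fun T : V →L[ℂ] V => T z) (hinv t))
      (by
        ext z
        have := hinv (-t)
        rw [neg_neg] at this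
        exact congrArg (fun T : V →L[ℂ] V => T z) this)
    exact h.map_mem φ (fun x y => exp_der_map μ D hD t x y) hx
  have hd : HasDerivAt (fun u : ℝ => NormedSpace.exp (u • A) x) (A x) 0 := by
    simpa using hasDerivAt_exp_apply A (hasDerivAt_const (0 : ℝ) x)
  have hcl : IsClosed ((Fil b p s : Submodule ℂ V) : Set V) := Submodule.closed_of_finiteDimensional _
  have ht := hd.tendsto_slope_zero
  show A x ∈ Fil b p s
  refine hcl.mem_of_tendsto ht (Filter.Eventually.of_forall fun t => ?_)
  have h1 : NormedSpace.exp ((0 + t) • A) x - NormedSpace.exp ((0 : ℝ) • A) x ∈ Fil b p s :=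
    Submodule.sub_mem _ (hmem _) (hmem _)
  exact Submodule.smul_of_tower_mem _ t⁻¹ h1

end ExpDer

/-! ### Semisimple parts of derivations -/

section Semisimple
variable {V : Type*} [AddCommGroup V] [Module ℂ V] {m : ℕ}

/-- A basis of generalized eigenvectors, `lam i` being the eigenvalue at the `i`-th vector. -/
theorem exists_genEigen_basis [FiniteDimensional ℂ V] (hm : finrank ℂ V = m) (T : V →ₗ[ℂ] V) :
    ∃ (b : Basis (Fin m) ℂ V) (lam : Fin m → ℂ),
      (∀ i, b i ∈ End.maxGenEigenspace T (lam i)) ∧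
        ∀ ν x, x ∈ End.maxGenEigenspace T ν → ∀ i, b.repr x i ≠ 0 → lam i = ν := by
  classical
  have hInt : DirectSum.IsInternal fun ν : ℂ => End.maxGenEigenspace T ν :=
    DirectSum.isInternal_submodule_of_iSupIndep_of_iSup_eq_top
      (End.independent_maxGenEigenspace T) (End.iSup_maxGenEigenspace_eq_top T)
  let B := hInt.collectedBasis fun ν => finBasis ℂ (End.maxGenEigenspace T ν)
  let ε := B.indexEquiv ((finBasis ℂ V).reindex (finCongr hm))
  refine ⟨B.reindex ε, fun i => (ε.symm i).1, fun i => ?_, fun ν x hx i hi => ?_⟩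
  · rw [Basis.reindex_apply]
    exact hInt.collectedBasis_mem _ _
  · by_contra hne
    apply hi
    rw [Basis.repr_reindex_apply]
    exact hInt.collectedBasis_repr_of_mem_ne
      (fun ν => finBasis ℂ (End.maxGenEigenspace T ν)) (i := ν) (j := (ε.symm i).1) (a := (ε.symm i).2)
      (fun h => hne h.symm) hx

theorem IsDer.sub_pow {μ : V →ₗ[ℂ] V →ₗ[ℂ] V} {T : V →ₗ[ℂ] V} (hT : IsDer μ T) (α β : ℂ) (n : ℕ) :
    ∀ k l x y, k + l ≤ n → ((T - α • (1 : End ℂ V)) ^ k) x = 0 →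
      ((T - β • (1 : End ℂ V)) ^ l) y = 0 →
      ((T - (α + β) • (1 : End ℂ V)) ^ n) (μ x y) = 0 := by
  induction n with
  | zero =>
    intro k l x y hkl hx _
    obtain rfl : k = 0 := by omega
    have hx : x = 0 := by simpa using hx
    simp [hx]
  | succ n ih =>
    intro k l x y hkl hx hy
    rcases Nat.eq_zero_or_pos k with rfl | hk
    · have hx : x = 0 := by simpa using hx
      simp [hx]
    rcases Nat.eq_zero_or_pos l with rfl | hl
    · have hy : y = 0 := by simpa using hy
      simp [hy]
    obtain ⟨k, rfl⟩ := Nat.exists_eq_succ_of_ne_zero hk.ne'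
    obtain ⟨l, rfl⟩ := Nat.exists_eq_succ_of_ne_zero hl.ne'
    have h1 : (T - (α + β) • (1 : End ℂ V)) (μ x y) =
        μ ((T - α • (1 : End ℂ V)) x) y + μ x ((T - β • (1 : End ℂ V)) y) := by
      have h2 := hT x y
      simp only [LinearMap.sub_apply, LinearMap.smul_apply, End.one_apply, map_sub, map_smul, h2,
        add_smul, LinearMap.add_apply]
      abel
    rw [pow_succ, End.mul_apply, h1, map_add]
    rw [ih k (l + 1) _ _ (by omega) (by rw [pow_succ, End.mul_apply] at hx; exact hx) hy,
      ih (k + 1) l _ _ (by omega) hx (by rw [pow_succ, End.mul_apply] at hy; exact hy), add_zero]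

theorem IsDer.mem_maxGen {μ : V →ₗ[ℂ] V →ₗ[ℂ] V} {T : V →ₗ[ℂ] V} (hT : IsDer μ T) {α β : ℂ}
    {x y : V} (hx : x ∈ End.maxGenEigenspace T α) (hy : y ∈ End.maxGenEigenspace T β) :
    μ x y ∈ End.maxGenEigenspace T (α + β) := by
  rw [End.mem_maxGenEigenspace] at hx hy ⊢
  obtain ⟨k, hk⟩ := hx
  obtain ⟨l, hl⟩ := hy
  exact ⟨k + l, hT.sub_pow α β (k + l) k l x y le_rfl hk hl⟩

/-- The operator that is diagonal in the basis `b` with entries `d`. -/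
def diagOp (b : Basis (Fin m) ℂ V) (d : Fin m → ℂ) : V →ₗ[ℂ] V :=
  b.constr ℂ fun i => d i • b i

theorem diagOp_basis (b : Basis (Fin m) ℂ V) (d : Fin m → ℂ) (i : Fin m) :
    diagOp b d (b i) = d i • b i := by simp [diagOp]

theorem diagOp_repr (b : Basis (Fin m) ℂ V) (d : Fin m → ℂ) (x : V) (i : Fin m) :
    b.repr (diagOp b d x) i = d i * b.repr x i := by
  have : (b.coord i) ∘ₗ diagOp b d = d i • b.coord i := by
    refine b.ext fun j => ?_
    simp only [LinearMap.comp_apply, diagOp_basis, LinearMap.smul_apply, Basis.coord_apply, map_smul,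
      Basis.repr_self, smul_eq_mul, Finsupp.single_apply]
    split_ifs with h
    · rw [h]
    · simp
  simpa using LinearMap.congr_fun this x

theorem trace_eq_sum_repr (b : Basis (Fin m) ℂ V) (A : V →ₗ[ℂ] V) :
    LinearMap.trace ℂ V A = ∑ i, b.repr (A (b i)) i := by
  rw [LinearMap.trace_eq_matrix_trace ℂ b]
  simp [Matrix.trace, LinearMap.toMatrix_apply]

/-- In a basis of generalized eigenvectors, `T` may be replaced by its semisimple part when
computing traces against operators constant on the generalized eigenspaces. -/
theorem trace_diagOp_comp [FiniteDimensional ℂ V] (T : V →ₗ[ℂ] V) (b : Basis (Fin m) ℂ V) (lam : Fin m → ℂ)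
    (h1 : ∀ i, b i ∈ End.maxGenEigenspace T (lam i))
    (h2 : ∀ ν x, x ∈ End.maxGenEigenspace T ν → ∀ i, b.repr x i ≠ 0 → lam i = ν) (f : ℂ → ℂ) :
    LinearMap.trace ℂ V (diagOp b (fun i => f (lam i)) ∘ₗ T) = ∑ i, f (lam i) * lam i := by
  have hdiag : ∀ (g : ℂ → ℂ) ν x, x ∈ End.maxGenEigenspace T ν →
      diagOp b (fun i => g (lam i)) x = g ν • x := by
    intro g ν x hx
    apply b.repr.injective
    ext i
    rw [diagOp_repr, map_smul, Finsupp.smul_apply, smul_eq_mul]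
    by_cases hi : b.repr x i = 0
    · rw [hi, mul_zero, mul_zero]
    · rw [h2 ν x hx i hi]
  have hTm : ∀ ν x, x ∈ End.maxGenEigenspace T ν → T x ∈ End.maxGenEigenspace T ν := fun ν x hx =>
    End.mapsTo_maxGenEigenspace_of_comm (Commute.refl T) ν hx
  set Es : End ℂ V := diagOp b lam with hEs
  set E : End ℂ V := diagOp b (fun i => f (lam i)) with hE
  have hEs' : ∀ ν x, x ∈ End.maxGenEigenspace T ν → Es x = ν • x := fun ν x hx => hdiag id ν x hx
  have hcomm : Commute E (T - Es) := by
    refine b.ext fun i => ?_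
    rw [End.mul_apply, End.mul_apply, hdiag f _ _ (h1 i)]
    have : (T - Es) (b i) ∈ End.maxGenEigenspace T (lam i) := by
      rw [LinearMap.sub_apply, hEs' _ _ (h1 i)]
      exact Submodule.sub_mem _ (hTm _ _ (h1 i)) (Submodule.smul_mem _ _ (h1 i))
    rw [hdiag f _ _ this, map_smul]
  have hnil : IsNilpotent (T - Es) := by
    refine ⟨finrank ℂ V, b.ext fun i => ?_⟩
    have hk : ∀ k : ℕ, ((T - Es) ^ k) (b i) = ((T - lam i • (1 : End ℂ V)) ^ k) (b i) ∧
        ((T - Es) ^ k) (b i) ∈ End.maxGenEigenspace T (lam i) := by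
      intro k
      induction k with
      | zero => exact ⟨rfl, h1 i⟩
      | succ k ih =>
        rw [pow_succ', pow_succ', End.mul_apply, End.mul_apply, ← ih.1]
        have : (T - Es) (((T - Es) ^ k) (b i)) = T (((T - Es) ^ k) (b i)) -
            lam i • ((T - Es) ^ k) (b i) := by
          rw [LinearMap.sub_apply, hEs' _ _ ih.2]
        refine ⟨by rw [this]; simp, ?_⟩
        rw [this]
        exact Submodule.sub_mem _ (hTm _ _ ih.2) (Submodule.smul_mem _ _ ih.2)
    rw [(hk _).1]
    have h3 := h1 i
    rw [End.maxGenEigenspace_eq_genEigenspace_finrank, End.mem_genEigenspace_nat] at h3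
    simpa using h3
  have htr0 : LinearMap.trace ℂ V (E * (T - Es)) = 0 :=
    (LinearMap.isNilpotent_trace_of_isNilpotent (hcomm.isNilpotent_mul_left hnil)).eq_zero
  have hsplit : E ∘ₗ T = E * (T - Es) + E * Es := by
    rw [mul_sub, sub_add_cancel]; rfl
  rw [hsplit, map_add, htr0, zero_add, trace_eq_sum_repr b]
  refine Finset.sum_congr rfl fun i _ => ?_
  rw [End.mul_apply, diagOp_basis, map_smul, diagOp_basis]
  simp [mul_comm]

theorem trace_eq_sum_eigen [FiniteDimensional ℂ V] (T : V →ₗ[ℂ] V) (b : Basis (Fin m) ℂ V) (lam : Fin m → ℂ)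
    (h1 : ∀ i, b i ∈ End.maxGenEigenspace T (lam i))
    (h2 : ∀ ν x, x ∈ End.maxGenEigenspace T ν → ∀ i, b.repr x i ≠ 0 → lam i = ν) :
    LinearMap.trace ℂ V T = ∑ i, lam i := by
  have h := trace_diagOp_comp T b lam h1 h2 (fun _ => 1)
  have h3 : diagOp b (fun _ => (1 : ℂ)) = LinearMap.id := b.ext fun i => by simp [diagOp_basis]
  rw [h3, LinearMap.id_comp] at h
  simpa using h

/-- The weight operator depends on the choice of an adapted basis only by terms that raise the
filtration: on level `s` it multiplies the coordinates of weight at most `s` by `s`. -/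
theorem diagOp_sub_mem (b b' : Basis (Fin m) ℂ V) (e e' : Fin m → ℝ)
    (h : Fil b' e' = Fil b e) {x : V} {s : ℝ} (hx : x ∈ Fil b e s) :
    ∀ i, e i ≤ s → b.repr (diagOp b' (fun i => (e' i : ℂ)) x) i = s * b.repr x i := by
  intro i hi
  set y := diagOp b' (fun i => (e' i : ℂ)) x - (s : ℂ) • x with hy
  have hyr : ∀ j, b'.repr y j = (e' j - s) * b'.repr x j := by
    intro j
    rw [hy, map_sub, Finsupp.sub_apply, diagOp_repr, map_smul, Finsupp.smul_apply, smul_eq_mul]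
    ring
  have h0 : b.repr y i = 0 := by
    by_cases hy0 : y = 0
    · simp [hy0]
    -- the value of `y` is a weight exceeding `s`
    obtain ⟨j, hj, hval⟩ := fil_val b' e' hy0
    have hsj : s < e' j := by
      by_contra! hle
      apply hj
      rw [hyr]
      rcases hle.lt_or_eq with hlt | heq
      · rw [(h ▸ hx : x ∈ Fil b' e' s) j hlt, mul_zero]
      · rw [heq, sub_self, zero_mul]
    have := (hval (e' j)).mpr le_rfl
    rw [h] at this
    exact this i (hi.trans_lt hsj)
  have : b.repr (diagOp b' (fun i => (e' i : ℂ)) x) i = b.repr y i + s * b.repr x i := by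
    rw [hy, map_sub, Finsupp.sub_apply, map_smul, Finsupp.smul_apply, smul_eq_mul]; ring
  rw [this, h0, zero_add]

end Semisimple

section Competitor
variable {V : Type*} [NormedAddCommGroup V] [InnerProductSpace ℂ V] [FiniteDimensional ℂ V] {m : ℕ}

/-- The real parts of the eigenvalues of a derivation `T` are the weights of a compatible
filtration, which can be realised on an orthonormal basis. -/
theorem exists_competitor {μ : V →ₗ[ℂ] V →ₗ[ℂ] V} {T : V →ₗ[ℂ] V} (hT : IsDer μ T)
    (hm : finrank ℂ V = m) :
    ∃ (v : OrthonormalBasis (Fin m) ℂ V) (r : Fin m → ℝ), Compat μ v.toBasis r ∧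
      ∑ i, r i = (LinearMap.trace ℂ V T).re ∧
      ∑ i, r i * (⟪v i, T (v i)⟫_ℂ).re = ∑ i, r i ^ 2 := by
  obtain ⟨b, lam, h1, h2⟩ := exists_genEigen_basis hm T
  set e : Fin m → ℝ := fun i => (lam i).re with he
  obtain ⟨v, r, hv⟩ := exists_ortho_basis b e
  have hc : Compat μ b e := by
    rw [compat_iff]
    intro i j k hk
    have h3 := h2 _ _ (hT.mem_maxGen (h1 i) (h1 j)) k hk
    simp [he, h3]
  refine ⟨v, r, compat_congr hv.symm hc, ?_, ?_⟩
  · rw [sum_weights_eq _ _ _ _ hv (fun x => x), trace_eq_sum_eigen T b lam h1 h2]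
    simp [he]
  · have hTf : ∀ i, T (b i) ∈ Fil b e (e i) := by
      intro i j hj
      by_contra hne
      have h3 := h2 _ _ (End.mapsTo_maxGenEigenspace_of_comm (Commute.refl T) _ (h1 i)) j hne
      simp [he, h3] at hj
    have htr : LinearMap.trace ℂ V (diagOp v.toBasis (fun i => (r i : ℂ)) ∘ₗ T) =
        LinearMap.trace ℂ V (diagOp b (fun i => (e i : ℂ)) ∘ₗ T) := by
      rw [trace_eq_sum_repr b, trace_eq_sum_repr b]
      refine Finset.sum_congr rfl fun i _ => ?_
      rw [LinearMap.comp_apply, LinearMap.comp_apply, diagOp_repr,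
        diagOp_sub_mem b v.toBasis e r hv (hTf i) i le_rfl]
    have h3 := trace_diagOp_comp T b lam h1 h2 (fun z => (z.re : ℂ))
    have h4 : LinearMap.trace ℂ V (diagOp v.toBasis (fun i => (r i : ℂ)) ∘ₗ T) =
        ∑ i, (r i : ℂ) * ⟪v i, T (v i)⟫_ℂ := by
      rw [trace_eq_sum_repr v.toBasis]
      refine Finset.sum_congr rfl fun i _ => ?_
      rw [LinearMap.comp_apply, diagOp_repr]
      simp [OrthonormalBasis.repr_apply_apply]
    rw [htr, h3] at h4
    have h5 := congrArg Complex.re h4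
    simp only [Complex.re_sum, Complex.re_ofReal_mul] at h5
    rw [← h5, sum_weights_eq _ _ _ _ hv (fun x => x ^ 2)]
    exact Finset.sum_congr rfl fun i _ => by simp [he, sq]

end Competitor

/-! ### Hilbert–Schmidt norms -/

section HilbertSchmidt
variable {V : Type*} [NormedAddCommGroup V] [InnerProductSpace ℂ V] [FiniteDimensional ℂ V] {m : ℕ}
variable {W : Type*} [NormedAddCommGroup W] [InnerProductSpace ℂ W]

/-- The squared Hilbert–Schmidt norm of a linear map, computed in an orthonormal basis. -/
def hs (b : OrthonormalBasis (Fin m) ℂ V) (f : V →ₗ[ℂ] W) : ℝ := ∑ i, ‖f (b i)‖ ^ 2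

theorem hs_nonneg (b : OrthonormalBasis (Fin m) ℂ V) (f : V →ₗ[ℂ] W) : 0 ≤ hs b f :=
  Finset.sum_nonneg fun _ _ => sq_nonneg _

theorem hs_eq_zero {b : OrthonormalBasis (Fin m) ℂ V} {f : V →ₗ[ℂ] W} (h : hs b f = 0) : f = 0 := by
  refine b.toBasis.ext fun i => ?_
  have := (Finset.sum_eq_zero_iff_of_nonneg fun i _ => sq_nonneg ‖f (b i)‖).mp h i
    (Finset.mem_univ _)
  simpa using this

theorem hs_indep [FiniteDimensional ℂ W] (b b' : OrthonormalBasis (Fin m) ℂ V) (f : V →ₗ[ℂ] W) :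
    hs b f = hs b' f := by
  have key : ∀ c : OrthonormalBasis (Fin m) ℂ V,
      ((hs c f : ℝ) : ℂ) = LinearMap.trace ℂ V (LinearMap.adjoint f ∘ₗ f) := by
    intro c
    rw [LinearMap.trace_eq_sum_inner _ c, hs, Complex.ofReal_sum]
    refine Finset.sum_congr rfl fun i _ => ?_
    rw [LinearMap.comp_apply, LinearMap.adjoint_inner_right, inner_self_eq_norm_sq_to_K]
    simp
  exact_mod_cast (key b).trans (key b').symm

/-- Moving an operator from one side of a Hilbert–Schmidt pairing to the other. -/
theorem sum_shift (b : OrthonormalBasis (Fin m) ℂ V) (f g : V →ₗ[ℂ] W) (A : V →ₗ[ℂ] V) :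
    ∑ i, ⟪f (b i), g (A (b i))⟫_ℂ = ∑ i, ⟪f (LinearMap.adjoint A (b i)), g (b i)⟫_ℂ := by
  have h1 : ∀ i, ⟪f (b i), g (A (b i))⟫_ℂ = ∑ k, ⟪b k, A (b i)⟫_ℂ * ⟪f (b i), g (b k)⟫_ℂ := by
    intro i
    conv_lhs => rw [← b.sum_repr' (A (b i))]
    simp only [map_sum, map_smul, inner_sum, inner_smul_right]
  have h2 : ∀ k, ⟪f (LinearMap.adjoint A (b k)), g (b k)⟫_ℂ =
      ∑ i, ⟪b k, A (b i)⟫_ℂ * ⟪f (b i), g (b k)⟫_ℂ := by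
    intro k
    conv_lhs => rw [← b.sum_repr' (LinearMap.adjoint A (b k))]
    simp only [map_sum, map_smul, sum_inner, inner_smul_left, LinearMap.adjoint_inner_right,
      inner_conj_symm]
  simp only [h1, h2]
  exact Finset.sum_comm

theorem sum_shift' (b : OrthonormalBasis (Fin m) ℂ V) (f g : V →ₗ[ℂ] W) (A : V →ₗ[ℂ] V) :
    ∑ i, ⟪f (b i), g (LinearMap.adjoint A (b i))⟫_ℂ = ∑ i, ⟪f (A (b i)), g (b i)⟫_ℂ := by
  rw [sum_shift, LinearMap.adjoint_adjoint]

theorem hs_eq_sum_inner (b : OrthonormalBasis (Fin m) ℂ V) (f : V →ₗ[ℂ] W) :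
    ((hs b f : ℝ) : ℂ) = ∑ i, ⟪f (b i), f (b i)⟫_ℂ := by
  rw [hs, Complex.ofReal_sum]
  exact Finset.sum_congr rfl fun i _ => by rw [inner_self_eq_norm_sq_to_K]; simp

theorem hs_adjoint (b : OrthonormalBasis (Fin m) ℂ V) (A : V →ₗ[ℂ] V) :
    hs b (LinearMap.adjoint A) = hs b A := by
  have : ((hs b (LinearMap.adjoint A) : ℝ) : ℂ) = hs b A := by
    rw [hs_eq_sum_inner, hs_eq_sum_inner]
    have h := sum_shift b A LinearMap.id A
    simp only [LinearMap.id_apply] at h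
    rw [h]
    exact Finset.sum_congr rfl fun i _ => by rw [LinearMap.adjoint_inner_right]
  exact_mod_cast this

theorem sum_norm_inner_sq (b : OrthonormalBasis (Fin m) ℂ V) (x : V) :
    ∑ k, ‖⟪b k, x⟫_ℂ‖ ^ 2 = ‖x‖ ^ 2 := b.sum_sq_norm_inner_right x

theorem sum_norm_inner_map (b : OrthonormalBasis (Fin m) ℂ V) (A : V →ₗ[ℂ] V) (x : V) :
    ∑ k, ‖⟪A (b k), x⟫_ℂ‖ ^ 2 = ‖LinearMap.adjoint A x‖ ^ 2 := by
  rw [← sum_norm_inner_sq b]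
  exact Finset.sum_congr rfl fun i _ => by rw [LinearMap.adjoint_inner_right]

theorem hs_expand (b : OrthonormalBasis (Fin m) ℂ V) (f g : V →ₗ[ℂ] W) :
    hs b (f - g) = hs b f + hs b g - 2 * (∑ i, ⟪f (b i), g (b i)⟫_ℂ).re := by
  simp only [hs, Complex.re_sum, Finset.mul_sum, ← Finset.sum_add_distrib, ← Finset.sum_sub_distrib]
  refine Finset.sum_congr rfl fun i _ => ?_
  rw [LinearMap.sub_apply, norm_sub_sq (𝕜 := ℂ)]
  simp only [RCLike.re_to_complex]
  ring

/-- For operators `D`, `A` the cross terms of `‖[D, A†]‖²` and `‖[D, A]‖²` agree. -/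
theorem hs_comm_sub (b : OrthonormalBasis (Fin m) ℂ V) (D A : V →ₗ[ℂ] V) :
    hs b (D ∘ₗ LinearMap.adjoint A - LinearMap.adjoint A ∘ₗ D) - hs b (D ∘ₗ A - A ∘ₗ D) =
      hs b (D ∘ₗ LinearMap.adjoint A) + hs b (LinearMap.adjoint A ∘ₗ D)
        - hs b (D ∘ₗ A) - hs b (A ∘ₗ D) := by
  rw [hs_expand, hs_expand]
  have h : (∑ i, ⟪(D ∘ₗ LinearMap.adjoint A) (b i), (LinearMap.adjoint A ∘ₗ D) (b i)⟫_ℂ).re =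
      (∑ i, ⟪(D ∘ₗ A) (b i), (A ∘ₗ D) (b i)⟫_ℂ).re := by
    have h1 : ∑ i, ⟪(D ∘ₗ LinearMap.adjoint A) (b i), (LinearMap.adjoint A ∘ₗ D) (b i)⟫_ℂ =
        ∑ i, ⟪(A ∘ₗ D) (b i), (D ∘ₗ A) (b i)⟫_ℂ := by
      rw [show (∑ i, ⟪(A ∘ₗ D) (b i), (D ∘ₗ A) (b i)⟫_ℂ) = ∑ i, ⟪(A ∘ₗ D) (b i), D (A (b i))⟫_ℂ
        from rfl, sum_shift b (A ∘ₗ D) D A]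
      exact Finset.sum_congr rfl fun i _ => by
        simp only [LinearMap.comp_apply, LinearMap.adjoint_inner_right]
    rw [h1, Complex.re_sum, Complex.re_sum]
    exact Finset.sum_congr rfl fun i _ => by rw [← inner_conj_symm, Complex.conj_re]
  rw [h]; ring

/-- Eigen-operators of `ad D`: if `[D, A] = w A` then `‖[D, A†]‖ ≥ ‖[D, A]‖`. -/
theorem hs_comm_le (b : OrthonormalBasis (Fin m) ℂ V) (D A : V →ₗ[ℂ] V) (w : ℂ)
    (h : D ∘ₗ A - A ∘ₗ D = w • A) :
    hs b (D ∘ₗ A - A ∘ₗ D) ≤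
      hs b (D ∘ₗ LinearMap.adjoint A - LinearMap.adjoint A ∘ₗ D) := by
  set G := D ∘ₗ LinearMap.adjoint A - LinearMap.adjoint A ∘ₗ D with hG
  have hw : hs b (D ∘ₗ A - A ∘ₗ D) = ‖w‖ ^ 2 * hs b A := by
    rw [h, hs, hs, Finset.mul_sum]
    exact Finset.sum_congr rfl fun i _ => by rw [LinearMap.smul_apply, norm_smul, mul_pow]
  have hw' : hs b ((-w) • LinearMap.adjoint A) = ‖w‖ ^ 2 * hs b A := by
    rw [← hs_adjoint b A, hs, hs, Finset.mul_sum]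
    exact Finset.sum_congr rfl fun i _ => by rw [LinearMap.smul_apply, norm_smul, mul_pow, norm_neg]
  have h1 : ∑ i, ⟪D (LinearMap.adjoint A (b i)), LinearMap.adjoint A (b i)⟫_ℂ =
      ∑ i, ⟪A (D (b i)), A (b i)⟫_ℂ := by
    have h2 := sum_shift b (A ∘ₗ D) LinearMap.id A
    simp only [LinearMap.id_apply, LinearMap.comp_apply] at h2
    rw [h2]
    exact Finset.sum_congr rfl fun i _ => by rw [LinearMap.adjoint_inner_right]
  have h2 : ∑ i, ⟪LinearMap.adjoint A (D (b i)), LinearMap.adjoint A (b i)⟫_ℂ =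
      ∑ i, ⟪D (A (b i)), A (b i)⟫_ℂ := by
    have h3 := sum_shift' b (LinearMap.adjoint A ∘ₗ D) LinearMap.id A
    simp only [LinearMap.id_apply, LinearMap.comp_apply] at h3
    rw [h3]
    exact Finset.sum_congr rfl fun i _ => by rw [LinearMap.adjoint_inner_left]
  have hcross : ∑ i, ⟪G (b i), ((-w) • LinearMap.adjoint A) (b i)⟫_ℂ =
      ((‖w‖ ^ 2 * hs b A : ℝ) : ℂ) := by
    have h3 : ∑ i, ⟪G (b i), LinearMap.adjoint A (b i)⟫_ℂ =
        - ∑ i, ⟪(D ∘ₗ A - A ∘ₗ D) (b i), A (b i)⟫_ℂ := by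
      simp only [hG, LinearMap.sub_apply, LinearMap.comp_apply, inner_sub_left,
        Finset.sum_sub_distrib, h1, h2]
      ring
    simp only [LinearMap.smul_apply, inner_smul_right, ← Finset.mul_sum]
    rw [h3, h]
    simp only [LinearMap.smul_apply, inner_smul_left, ← Finset.mul_sum]
    rw [← hs_eq_sum_inner, Complex.ofReal_mul, Complex.ofReal_pow, ← Complex.mul_conj']
    ring
  have h4 := hs_expand b G ((-w) • LinearMap.adjoint A)
  rw [hcross, hw', Complex.ofReal_re] at h4
  have h5 := hs_nonneg b (G - (-w) • LinearMap.adjoint A)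
  rw [hw]
  linarith

end HilbertSchmidt

section Bilinear
variable {V : Type*} [NormedAddCommGroup V] [InnerProductSpace ℂ V] [FiniteDimensional ℂ V] {m : ℕ}

/-- The defect of `A` to be a derivation of `μ`. -/
def defect (μ : V →ₗ[ℂ] V →ₗ[ℂ] V) (A : V →ₗ[ℂ] V) (x y : V) : V :=
  A (μ x y) - (μ (A x) y + μ x (A y))

/-- The squared norm of the defect, expanded with the help of the skew symmetry of `μ`. -/
theorem defect_norm (b : OrthonormalBasis (Fin m) ℂ V) (μ : V →ₗ[ℂ] V →ₗ[ℂ] V)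
    (hskew : ∀ x y, μ x y = - μ y x) (A : V →ₗ[ℂ] V) :
    ∑ i, ∑ j, ‖defect μ A (b i) (b j)‖ ^ 2 =
      ∑ i, ∑ j, ‖A (μ (b i) (b j))‖ ^ 2 + 2 * ∑ i, ∑ j, ‖μ (A (b i)) (b j)‖ ^ 2
      - 4 * (∑ i, ∑ j, ⟪A (μ (b i) (b j)), μ (A (b i)) (b j)⟫_ℂ).re
      + 2 * (∑ i, ∑ j, ⟪μ (A (b i)) (b j), μ (b i) (A (b j))⟫_ℂ).re := by
  have h1 : ∑ i, ∑ j, ‖μ (b i) (A (b j))‖ ^ 2 = ∑ i, ∑ j, ‖μ (A (b i)) (b j)‖ ^ 2 := by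
    rw [Finset.sum_comm]
    exact Finset.sum_congr rfl fun i _ => Finset.sum_congr rfl fun j _ => by rw [hskew, norm_neg]
  have h2 : ∑ i, ∑ j, (⟪A (μ (b i) (b j)), μ (b i) (A (b j))⟫_ℂ).re =
      ∑ i, ∑ j, (⟪A (μ (b i) (b j)), μ (A (b i)) (b j)⟫_ℂ).re := by
    rw [Finset.sum_comm]
    exact Finset.sum_congr rfl fun i _ => Finset.sum_congr rfl fun j _ => by
      rw [hskew (b j) (b i), hskew (b j) (A (b i)), map_neg, inner_neg_neg]
  have h3 : ∀ i j, ‖defect μ A (b i) (b j)‖ ^ 2 =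
      ‖A (μ (b i) (b j))‖ ^ 2 + ‖μ (A (b i)) (b j)‖ ^ 2 + ‖μ (b i) (A (b j))‖ ^ 2
      - 2 * (⟪A (μ (b i) (b j)), μ (A (b i)) (b j)⟫_ℂ).re
      - 2 * (⟪A (μ (b i) (b j)), μ (b i) (A (b j))⟫_ℂ).re
      + 2 * (⟪μ (A (b i)) (b j), μ (b i) (A (b j))⟫_ℂ).re := by
    intro i j
    rw [defect, norm_sub_sq (𝕜 := ℂ), norm_add_sq (𝕜 := ℂ), inner_add_right]
    simp only [RCLike.re_to_complex, Complex.add_re]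
    ring
  simp only [h3, Complex.re_sum, Finset.sum_add_distrib, Finset.sum_sub_distrib, ← Finset.mul_sum]
  rw [h1, h2]
  ring

/-- Comparison of the derivation defects of `A†` and `A`: the mixed terms of the two expansions
cancel. -/
theorem defect_sub (b : OrthonormalBasis (Fin m) ℂ V) (μ : V →ₗ[ℂ] V →ₗ[ℂ] V)
    (hskew : ∀ x y, μ x y = - μ y x) (A : V →ₗ[ℂ] V) :
    ∑ i, ∑ j, ‖defect μ (LinearMap.adjoint A) (b i) (b j)‖ ^ 2
      - ∑ i, ∑ j, ‖defect μ A (b i) (b j)‖ ^ 2 =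
    ∑ i, ∑ j, ‖LinearMap.adjoint A (μ (b i) (b j))‖ ^ 2 - ∑ i, ∑ j, ‖A (μ (b i) (b j))‖ ^ 2
      + 2 * (∑ i, ∑ j, ‖μ (LinearMap.adjoint A (b i)) (b j)‖ ^ 2
        - ∑ i, ∑ j, ‖μ (A (b i)) (b j)‖ ^ 2) := by
  set A' := LinearMap.adjoint A with hA'
  have hre : ∀ x y : V, (⟪x, y⟫_ℂ).re = (⟪y, x⟫_ℂ).re := fun x y => by
    rw [← inner_conj_symm, Complex.conj_re]
  have h1 : (∑ i, ∑ j, ⟪A' (μ (b i) (b j)), μ (A' (b i)) (b j)⟫_ℂ).re =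
      (∑ i, ∑ j, ⟪A (μ (b i) (b j)), μ (A (b i)) (b j)⟫_ℂ).re := by
    have h2 : ∑ i, ∑ j, ⟪A' (μ (b i) (b j)), μ (A' (b i)) (b j)⟫_ℂ =
        ∑ i, ∑ j, ⟪μ (A (b i)) (b j), A (μ (b i) (b j))⟫_ℂ := by
      rw [Finset.sum_comm, Finset.sum_comm (f := fun i j =>
        ⟪μ (A (b i)) (b j), A (μ (b i) (b j))⟫_ℂ)]
      refine Finset.sum_congr rfl fun j _ => ?_
      have h3 := sum_shift' b (μ.flip (b j)) (A ∘ₗ μ.flip (b j)) A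
      simp only [LinearMap.comp_apply, LinearMap.flip_apply] at h3
      rw [← h3]
      exact Finset.sum_congr rfl fun i _ => by rw [hA', LinearMap.adjoint_inner_left]
    rw [h2]
    simp only [Complex.re_sum]
    exact Finset.sum_congr rfl fun i _ => Finset.sum_congr rfl fun j _ => hre _ _
  have h2 : (∑ i, ∑ j, ⟪μ (A' (b i)) (b j), μ (b i) (A' (b j))⟫_ℂ).re =
      (∑ i, ∑ j, ⟪μ (A (b i)) (b j), μ (b i) (A (b j))⟫_ℂ).re := by
    have h3 : ∑ i, ∑ j, ⟪μ (A' (b i)) (b j), μ (b i) (A' (b j))⟫_ℂ =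
        ∑ i, ∑ j, ⟪μ (A' (b i)) (A (b j)), μ (b i) (b j)⟫_ℂ := by
      refine Finset.sum_congr rfl fun i _ => ?_
      exact sum_shift' b (μ (A' (b i))) (μ (b i)) A
    have h4 : ∑ i, ∑ j, ⟪μ (A' (b i)) (A (b j)), μ (b i) (b j)⟫_ℂ =
        ∑ i, ∑ j, ⟪μ (b i) (A (b j)), μ (A (b i)) (b j)⟫_ℂ := by
      rw [Finset.sum_comm, Finset.sum_comm (f := fun i j =>
        ⟪μ (b i) (A (b j)), μ (A (b i)) (b j)⟫_ℂ)]
      refine Finset.sum_congr rfl fun j _ => ?_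
      exact (sum_shift b (μ.flip (A (b j))) (μ.flip (b j)) A).symm
    rw [h3, h4]
    simp only [Complex.re_sum]
    exact Finset.sum_congr rfl fun i _ => Finset.sum_congr rfl fun j _ => hre _ _
  rw [defect_norm b μ hskew A', defect_norm b μ hskew A, h1, h2]
  ring

end Bilinear

/-! ### Rigidity of the mean curvature derivation -/

section Core
variable {V : Type*} [NormedAddCommGroup V] [InnerProductSpace ℂ V] [FiniteDimensional ℂ V] {m : ℕ}
variable {ι : Type*} [Fintype ι]

/-- The quadratic form of `R - B/2` on the (complexified) derived ideal of a metric solvable Lie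
algebra, where `B` vanishes: `μ` is the bracket of the ideal, `D α` the action of an orthonormal basis of its complement, and
`lam α β` the brackets of that basis. -/
def rho (μ : V →ₗ[ℂ] V →ₗ[ℂ] V) (D : ι → V →ₗ[ℂ] V) (lam : ι → ι → V)
    (b : OrthonormalBasis (Fin m) ℂ V) (v : V) : ℝ :=
  -(1/2) * (∑ α, ‖D α v‖ ^ 2 + ∑ i, ‖μ v (b i)‖ ^ 2) +
    (1/4) * (∑ α, ∑ β, ‖⟪v, lam α β⟫_ℂ‖ ^ 2 + 2 * ∑ α, ∑ i, ‖⟪v, D α (b i)⟫_ℂ‖ ^ 2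
      + ∑ i, ∑ j, ‖⟪v, μ (b i) (b j)⟫_ℂ‖ ^ 2)

/-- The lower central series of the algebra `(V, μ)`. -/
def lcs (μ : V →ₗ[ℂ] V →ₗ[ℂ] V) : ℕ → Submodule ℂ V
  | 0 => ⊤
  | k + 1 => Submodule.span ℂ {z | ∃ x, ∃ y ∈ lcs μ k, z = μ x y}

theorem mul_mem_lcs (μ : V →ₗ[ℂ] V →ₗ[ℂ] V) {k : ℕ} (x : V) {y : V} (hy : y ∈ lcs μ k) :
    μ x y ∈ lcs μ (k + 1) := Submodule.subset_span ⟨x, y, hy, rfl⟩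

theorem IsDer.lcs_mem {μ : V →ₗ[ℂ] V →ₗ[ℂ] V} {A : V →ₗ[ℂ] V} (hA : IsDer μ A) (k : ℕ) :
    ∀ x ∈ lcs μ k, A x ∈ lcs μ k := by
  induction k with
  | zero => intro x _; trivial
  | succ k ih =>
    intro x hx
    have : lcs μ (k + 1) ≤ (lcs μ (k + 1)).comap A := by
      refine Submodule.span_le.mpr ?_
      rintro _ ⟨x, y, hy, rfl⟩
      rw [SetLike.mem_coe, Submodule.mem_comap, hA]
      exact Submodule.add_mem _ (mul_mem_lcs μ _ hy) (mul_mem_lcs μ _ (ih y hy))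
    exact this hx

/-- The data obtained from an Einstein metric solvable Lie algebra by complexifying the ideal
`[𝔰, 𝔰]`: `μ` is the nilpotent bracket of the ideal, `D α` the derivations by an orthonormal basis
of the complement, `lam` the brackets of that basis, `T` the derivation by the mean curvature
vector, and `-κ` the Einstein constant. -/
structure EinData (μ : V →ₗ[ℂ] V →ₗ[ℂ] V) (D : ι → V →ₗ[ℂ] V) (lam : ι → ι → V)
    (T : V →ₗ[ℂ] V) (κ : ℝ) (m : ℕ) : Prop where
  dim : finrank ℂ V = m
  skew : ∀ x y, μ x y = - μ y x
  derμ : ∀ x, IsDer μ (μ x)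
  derD : ∀ α, IsDer μ (D α)
  derT : IsDer μ T
  comm : ∀ α β x, D α (D β x) - D β (D α x) = μ (lam α β) x
  nilp : ∃ k, lcs μ k = ⊥
  pos : 0 < κ
  ricci : ∀ (b : OrthonormalBasis (Fin m) ℂ V) v,
    rho μ D lam b v = -κ * ‖v‖ ^ 2 + (⟪v, T v⟫_ℂ).re
  trace_le : ∀ b : OrthonormalBasis (Fin m) ℂ V,
    hs b ((1/2 : ℂ) • (T + LinearMap.adjoint T)) ≤ κ * (LinearMap.trace ℂ V T).re

/-- The symmetric part of an operator. -/
def symPart (T : V →ₗ[ℂ] V) : V →ₗ[ℂ] V := (1/2 : ℂ) • (T + LinearMap.adjoint T)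

theorem symPart_adjoint (T : V →ₗ[ℂ] V) : LinearMap.adjoint (symPart T) = symPart T := by
  rw [symPart, map_smulₛₗ, map_add, LinearMap.adjoint_adjoint, add_comm,
    show (1/2 : ℂ) = ((1/2 : ℝ) : ℂ) by norm_num, Complex.conj_ofReal]

theorem re_inner_symPart (T : V →ₗ[ℂ] V) (v : V) :
    (⟪v, symPart T v⟫_ℂ).re = (⟪v, T v⟫_ℂ).re := by
  have h : (⟪v, LinearMap.adjoint T v⟫_ℂ).re = (⟪v, T v⟫_ℂ).re := by
    rw [LinearMap.adjoint_inner_right, ← inner_conj_symm, Complex.conj_re]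
  simp only [symPart, LinearMap.smul_apply, LinearMap.add_apply, inner_smul_right, inner_add_right]
  rw [show (1/2 : ℂ) = ((1/2 : ℝ) : ℂ) by norm_num, Complex.re_ofReal_mul, Complex.add_re, h]
  ring

theorem sum_mul_re_le (b : OrthonormalBasis (Fin m) ℂ V) (T : V →ₗ[ℂ] V) (r : Fin m → ℝ) :
    ∑ i, r i * (⟪b i, T (b i)⟫_ℂ).re ≤ √(∑ i, r i ^ 2) * √(hs b (symPart T)) := by
  refine (Real.sum_mul_le_sqrt_mul_sqrt _ _ _).trans ?_
  refine mul_le_mul_of_nonneg_left (Real.sqrt_le_sqrt ?_) (Real.sqrt_nonneg _)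
  refine Finset.sum_le_sum fun i _ => ?_
  rw [← re_inner_symPart, ← sq_abs]
  refine pow_le_pow_left₀ (abs_nonneg _) ?_ 2
  refine (Complex.abs_re_le_norm _).trans ((norm_inner_le_norm _ _).trans ?_)
  simp

/-- If `S` is diagonal in an orthonormal basis and `y` only involves basis vectors with eigenvalue
`s`, then `S y = s y`. -/
theorem eigen_of_coeff (b : OrthonormalBasis (Fin m) ℂ V) {S : V →ₗ[ℂ] V} {d : Fin m → ℝ}
    (hS : ∀ k, S (b k) = (d k : ℂ) • b k) {y : V} {s : ℝ}
    (h : ∀ k, ⟪b k, y⟫_ℂ ≠ 0 → d k = s) : S y = (s : ℂ) • y := by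
  conv_lhs => rw [← b.sum_repr' y]
  conv_rhs => rw [← b.sum_repr' y]
  rw [map_sum, Finset.smul_sum]
  refine Finset.sum_congr rfl fun k _ => ?_
  by_cases hk : ⟪b k, y⟫_ℂ = 0
  · simp [hk]
  · rw [map_smul, hS, h k hk, smul_comm]

/-- The Ricci form paired with a diagonal operator `diag p` in an orthonormal basis. Every nonzero
structure constant contributes with a coefficient that is nonnegative when the weights `p` are
nonnegative and define a filtration respected by `μ` and all `D α`. -/
theorem sum_mul_rho (μ : V →ₗ[ℂ] V →ₗ[ℂ] V) (hskew : ∀ x y, μ x y = - μ y x)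
    (D : ι → V →ₗ[ℂ] V) (lam : ι → ι → V)
    (b : OrthonormalBasis (Fin m) ℂ V) (p : Fin m → ℝ) :
    4 * ∑ k, p k * rho μ D lam b (b k) =
      ∑ k, ∑ α, ∑ β, p k * ‖⟪b k, lam α β⟫_ℂ‖ ^ 2
      + 2 * ∑ α, ∑ j, ∑ i, (p i - p j) * ‖⟪b i, D α (b j)⟫_ℂ‖ ^ 2
      + ∑ k, ∑ i, ∑ j, (p k - p i - p j) * ‖⟪b k, μ (b i) (b j)⟫_ℂ‖ ^ 2 := by
  have e1 : ∀ k, 4 * (p k * rho μ D lam b (b k)) =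
      ∑ α, ∑ β, p k * ‖⟪b k, lam α β⟫_ℂ‖ ^ 2
      + 2 * (∑ α, ∑ j, p k * ‖⟪b k, D α (b j)⟫_ℂ‖ ^ 2 - ∑ α, ∑ i, p k * ‖⟪b i, D α (b k)⟫_ℂ‖ ^ 2)
      + (∑ i, ∑ j, p k * ‖⟪b k, μ (b i) (b j)⟫_ℂ‖ ^ 2
        - 2 * ∑ i, ∑ l, p k * ‖⟪b l, μ (b k) (b i)⟫_ℂ‖ ^ 2) := by
    intro k
    simp only [rho, ← Finset.mul_sum, sum_norm_inner_sq]
    ring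
  rw [Finset.mul_sum]
  simp only [e1, Finset.sum_add_distrib, Finset.sum_sub_distrib, ← Finset.mul_sum]
  have e2 : ∑ k, p k * ∑ α, ∑ j, ‖⟪b k, D α (b j)⟫_ℂ‖ ^ 2
      - ∑ k, p k * ∑ α, ∑ i, ‖⟪b i, D α (b k)⟫_ℂ‖ ^ 2 =
      ∑ α, ∑ j, ∑ i, (p i - p j) * ‖⟪b i, D α (b j)⟫_ℂ‖ ^ 2 := by
    simp only [sub_mul, Finset.sum_sub_distrib, Finset.mul_sum]
    congr 1
    · rw [Finset.sum_comm]
      exact Finset.sum_congr rfl fun α _ => Finset.sum_comm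
    · rw [Finset.sum_comm]
  have e3 : ∑ k, p k * ∑ i, ∑ j, ‖⟪b k, μ (b i) (b j)⟫_ℂ‖ ^ 2
      - 2 * ∑ k, p k * ∑ i, ∑ l, ‖⟪b l, μ (b k) (b i)⟫_ℂ‖ ^ 2 =
      ∑ k, ∑ i, ∑ j, (p k - p i - p j) * ‖⟪b k, μ (b i) (b j)⟫_ℂ‖ ^ 2 := by
    simp only [sub_mul, Finset.sum_sub_distrib, Finset.mul_sum]
    have a1 : ∑ k, ∑ i, ∑ j, p i * ‖⟪b k, μ (b i) (b j)⟫_ℂ‖ ^ 2 =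
        ∑ k, ∑ i, ∑ l, p k * ‖⟪b l, μ (b k) (b i)⟫_ℂ‖ ^ 2 := by
      rw [Finset.sum_comm]
      exact Finset.sum_congr rfl fun i _ => Finset.sum_comm
    have a2 : ∑ k, ∑ i, ∑ j, p j * ‖⟪b k, μ (b i) (b j)⟫_ℂ‖ ^ 2 =
        ∑ k, ∑ i, ∑ j, p i * ‖⟪b k, μ (b i) (b j)⟫_ℂ‖ ^ 2 := by
      refine Finset.sum_congr rfl fun k _ => ?_
      rw [Finset.sum_comm]
      exact Finset.sum_congr rfl fun i _ => Finset.sum_congr rfl fun j _ => by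
        rw [hskew, inner_neg_right, norm_neg]
    rw [a2, a1]
    simp only [← Finset.mul_sum]
    ring
  rw [e2, e3]

variable {μ : V →ₗ[ℂ] V →ₗ[ℂ] V} {D : ι → V →ₗ[ℂ] V} {lam : ι → ι → V} {T : V →ₗ[ℂ] V} {κ : ℝ}

/-- The weight vector of the optimal filtration is at least as long as `S / κ`. -/
theorem EinData.norm_le (h : EinData μ D lam T κ m) {b : Basis (Fin m) ℂ V} {p : Fin m → ℝ}
    (hopt : IsOpt μ b p) (v : OrthonormalBasis (Fin m) ℂ V) :
    √(hs v (symPart T)) ≤ κ * √(∑ i, p i ^ 2) := by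
  obtain ⟨w, r, hc, hr, hr2⟩ := exists_competitor h.derT h.dim
  set N := √(hs v (symPart T)) with hN
  set P := √(∑ i, p i ^ 2)
  set ρ := √(∑ i, r i ^ 2) with hρ
  have hN2 : N ^ 2 = hs v (symPart T) := Real.sq_sqrt (hs_nonneg _ _)
  have hρ2 : ρ ^ 2 = ∑ i, r i ^ 2 := Real.sq_sqrt (Finset.sum_nonneg fun _ _ => sq_nonneg _)
  have hN0 : 0 ≤ N := Real.sqrt_nonneg _
  have hP0 : 0 ≤ P := Real.sqrt_nonneg _
  have hρ0 : 0 ≤ ρ := Real.sqrt_nonneg _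
  have h1 : ρ ^ 2 ≤ ρ * N := by
    rw [hρ2, ← hr2, hN, hs_indep v w]
    exact sum_mul_re_le w T r
  have h2 : ρ ≤ N := by
    by_contra! hlt
    nlinarith
  have h3 : (LinearMap.trace ℂ V T).re ≤ P * ρ := hr ▸ hopt.sum_le hc
  have h4 : N ^ 2 ≤ κ * (P * ρ) := by
    rw [hN2]
    exact (h.trace_le v).trans (mul_le_mul_of_nonneg_left h3 h.pos.le)
  have h5 : N ^ 2 ≤ κ * P * N := by
    have : κ * (P * ρ) ≤ κ * (P * N) :=
      mul_le_mul_of_nonneg_left (mul_le_mul_of_nonneg_left h2 hP0) h.pos.le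
    linarith
  have h6 : 0 ≤ κ * P := mul_nonneg h.pos.le hP0
  by_contra! hlt
  nlinarith

/-- The optimal filtration forces rigidity: `S = κ E` with `E` the weight operator of the
filtration, and `S` is a derivation that kills all `lam α β` and commutes with all `D α`. -/
theorem EinData.rigid (h : EinData μ D lam T κ m) :
    (∀ α β, symPart T (lam α β) = 0) ∧ (∀ α x, symPart T (D α x) = D α (symPart T x)) ∧
      IsDer μ (symPart T) := by
  obtain ⟨b₀, p₀, hopt₀⟩ := exists_isOpt μ ((finBasis ℂ V).reindex (finCongr h.dim))
  obtain ⟨b, p, hb⟩ := exists_ortho_basis b₀ p₀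
  have hopt : IsOpt μ b.toBasis p := isOpt_congr hb.symm hopt₀
  have hcoeff : ∀ {x : V} {s : ℝ} (_ : x ∈ Fil b.toBasis p s) (k), ⟪b k, x⟫_ℂ ≠ 0 → s ≤ p k := by
    intro x s hx k hk
    by_contra! hlt
    have := hx k hlt
    simp [OrthonormalBasis.repr_apply_apply] at this
    exact hk this
  have hbm : ∀ i, b i ∈ Fil b.toBasis p (p i) := fun i => by
    simpa using basis_mem_fil b.toBasis p i
  have hp0 : ∀ i, 0 ≤ p i :=
    hopt.nonneg h.skew fun x s y hy => hopt.der_mem (h.derμ x) hy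
  have t1 : ∀ k α β, 0 ≤ p k * ‖⟪b k, lam α β⟫_ℂ‖ ^ 2 := fun k α β =>
    mul_nonneg (hp0 k) (sq_nonneg _)
  have t2 : ∀ α j i, 0 ≤ (p i - p j) * ‖⟪b i, D α (b j)⟫_ℂ‖ ^ 2 := by
    intro α j i
    by_cases h0 : ⟪b i, D α (b j)⟫_ℂ = 0
    · simp [h0]
    · have := hcoeff (hopt.der_mem (h.derD α) (hbm j)) i h0
      exact mul_nonneg (by linarith) (sq_nonneg _)
  have t3 : ∀ k i j, 0 ≤ (p k - p i - p j) * ‖⟪b k, μ (b i) (b j)⟫_ℂ‖ ^ 2 := by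
    intro k i j
    by_cases h0 : ⟪b k, μ (b i) (b j)⟫_ℂ = 0
    · simp [h0]
    · have := hcoeff (hopt.1 _ _ _ _ (hbm i) (hbm j)) k h0
      exact mul_nonneg (by linarith) (sq_nonneg _)
  set P := ∑ i, p i ^ 2 with hP
  have hP0 : 0 ≤ P := Finset.sum_nonneg fun _ _ => sq_nonneg _
  set σ := ∑ k, p k * (⟪b k, T (b k)⟫_ℂ).re with hσ
  have hrho : ∑ k, p k * rho μ D lam b (b k) = -κ * P + σ := by
    have : ∀ k, p k * rho μ D lam b (b k) = -κ * p k + p k * (⟪b k, T (b k)⟫_ℂ).re := by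
      intro k; rw [h.ricci]; simp; ring
    simp only [this, Finset.sum_add_distrib, ← Finset.mul_sum]
    rw [hopt.sum_eq]
  have hNle := h.norm_le hopt b
  have hσ1 : σ ≤ κ * P := by
    have h1 := sum_mul_re_le b T p
    have h2 : √P * √(hs b (symPart T)) ≤ √P * (κ * √P) :=
      mul_le_mul_of_nonneg_left hNle (Real.sqrt_nonneg _)
    have h3 : √P * (κ * √P) = κ * P := by
      rw [mul_left_comm, Real.mul_self_sqrt hP0]
    linarith
  -- the left side of `hQ` is `4 (-κ P + σ) ≤ 0`, the right side is a sum of nonnegative terms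
  have hQ := sum_mul_rho μ h.skew D lam b p
  rw [hrho] at hQ
  have s1 : 0 ≤ ∑ k, ∑ α, ∑ β, p k * ‖⟪b k, lam α β⟫_ℂ‖ ^ 2 := Finset.sum_nonneg fun k _ =>
    Finset.sum_nonneg fun α _ => Finset.sum_nonneg fun β _ => t1 k α β
  have s2 : 0 ≤ ∑ α, ∑ j, ∑ i, (p i - p j) * ‖⟪b i, D α (b j)⟫_ℂ‖ ^ 2 :=
    Finset.sum_nonneg fun α _ => Finset.sum_nonneg fun j _ => Finset.sum_nonneg fun i _ => t2 α j i
  have s3 : 0 ≤ ∑ k, ∑ i, ∑ j, (p k - p i - p j) * ‖⟪b k, μ (b i) (b j)⟫_ℂ‖ ^ 2 :=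
    Finset.sum_nonneg fun k _ => Finset.sum_nonneg fun i _ => Finset.sum_nonneg fun j _ => t3 k i j
  have z1 : ∀ k α β, p k * ‖⟪b k, lam α β⟫_ℂ‖ ^ 2 = 0 := by
    have : ∑ k, ∑ α, ∑ β, p k * ‖⟪b k, lam α β⟫_ℂ‖ ^ 2 = 0 := by linarith
    intro k α β
    have a1 := (Finset.sum_eq_zero_iff_of_nonneg fun k _ => Finset.sum_nonneg fun α _ =>
      Finset.sum_nonneg fun β _ => t1 k α β).mp this k (Finset.mem_univ _)
    have a2 := (Finset.sum_eq_zero_iff_of_nonneg fun α _ =>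
      Finset.sum_nonneg fun β _ => t1 k α β).mp a1 α (Finset.mem_univ _)
    exact (Finset.sum_eq_zero_iff_of_nonneg fun β _ => t1 k α β).mp a2 β (Finset.mem_univ _)
  have z2 : ∀ α j i, (p i - p j) * ‖⟪b i, D α (b j)⟫_ℂ‖ ^ 2 = 0 := by
    have : ∑ α, ∑ j, ∑ i, (p i - p j) * ‖⟪b i, D α (b j)⟫_ℂ‖ ^ 2 = 0 := by linarith
    intro α j i
    have a1 := (Finset.sum_eq_zero_iff_of_nonneg fun k _ => Finset.sum_nonneg fun α _ =>
      Finset.sum_nonneg fun β _ => t2 k α β).mp this α (Finset.mem_univ _)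
    have a2 := (Finset.sum_eq_zero_iff_of_nonneg fun j _ =>
      Finset.sum_nonneg fun i _ => t2 α j i).mp a1 j (Finset.mem_univ _)
    exact (Finset.sum_eq_zero_iff_of_nonneg fun i _ => t2 α j i).mp a2 i (Finset.mem_univ _)
  have z3 : ∀ k i j, (p k - p i - p j) * ‖⟪b k, μ (b i) (b j)⟫_ℂ‖ ^ 2 = 0 := by
    have : ∑ k, ∑ i, ∑ j, (p k - p i - p j) * ‖⟪b k, μ (b i) (b j)⟫_ℂ‖ ^ 2 = 0 := by linarith
    intro k i j
    have a1 := (Finset.sum_eq_zero_iff_of_nonneg fun k _ => Finset.sum_nonneg fun α _ =>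
      Finset.sum_nonneg fun β _ => t3 k α β).mp this k (Finset.mem_univ _)
    have a2 := (Finset.sum_eq_zero_iff_of_nonneg fun i _ =>
      Finset.sum_nonneg fun j _ => t3 k i j).mp a1 i (Finset.mem_univ _)
    exact (Finset.sum_eq_zero_iff_of_nonneg fun j _ => t3 k i j).mp a2 j (Finset.mem_univ _)
  have hσ2 : κ * P ≤ σ := by linarith
  -- `σ = κ P` is the equality case of the Cauchy–Schwarz inequality for `S` and the weight operator,
  -- because `‖S‖² ≤ κ² P`
  have hS : ∀ k, symPart T (b k) = ((κ * p k : ℝ) : ℂ) • b k := by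
    have hN2 : hs b (symPart T) ≤ κ ^ 2 * P := by
      have h1 := pow_le_pow_left₀ (Real.sqrt_nonneg _) hNle 2
      rwa [Real.sq_sqrt (hs_nonneg _ _), mul_pow, Real.sq_sqrt hP0] at h1
    have hterm : ∀ k, ‖symPart T (b k) - ((κ * p k : ℝ) : ℂ) • b k‖ ^ 2 =
        ‖symPart T (b k)‖ ^ 2 - 2 * κ * (p k * (⟪b k, T (b k)⟫_ℂ).re) + κ ^ 2 * p k ^ 2 := by
      intro k
      rw [norm_sub_sq (𝕜 := ℂ), inner_smul_right, norm_smul]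
      simp only [RCLike.re_to_complex, Complex.re_ofReal_mul]
      have : (⟪symPart T (b k), b k⟫_ℂ).re = (⟪b k, T (b k)⟫_ℂ).re := by
        rw [← re_inner_symPart, ← inner_conj_symm, Complex.conj_re]
      rw [this, b.norm_eq_one, Complex.norm_real, mul_one, Real.norm_eq_abs, sq_abs]
      ring
    have hsum : ∑ k, ‖symPart T (b k) - ((κ * p k : ℝ) : ℂ) • b k‖ ^ 2 ≤ 0 := by
      simp only [hterm, Finset.sum_add_distrib, Finset.sum_sub_distrib, ← Finset.mul_sum]
      have : hs b (symPart T) = ∑ k, ‖symPart T (b k)‖ ^ 2 := rfl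
      rw [← this]
      nlinarith [h.pos]
    intro k
    have := (Finset.sum_eq_zero_iff_of_nonneg fun k _ => sq_nonneg
      ‖symPart T (b k) - ((κ * p k : ℝ) : ℂ) • b k‖).mp
      (le_antisymm hsum (Finset.sum_nonneg fun _ _ => sq_nonneg _)) k (Finset.mem_univ _)
    rwa [sq_eq_zero_iff, norm_eq_zero, sub_eq_zero] at this
  have hSy : ∀ {y : V} {s : ℝ}, (∀ k, ⟪b k, y⟫_ℂ ≠ 0 → p k = s) →
      symPart T y = ((κ * s : ℝ) : ℂ) • y := fun {y s} hy =>
    eigen_of_coeff b hS fun k hk => by rw [hy k hk]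
  have hsq : ∀ {z : ℂ}, z ≠ 0 → ‖z‖ ^ 2 ≠ 0 := fun hz => pow_ne_zero 2 (norm_ne_zero_iff.mpr hz)
  refine ⟨fun α β => ?_, fun α x => ?_, ?_⟩
  · have := hSy (y := lam α β) (s := 0) fun k hk =>
      (mul_eq_zero.mp (z1 k α β)).resolve_right (hsq hk)
    simpa using this
  · have : symPart T ∘ₗ D α = D α ∘ₗ symPart T := by
      refine b.toBasis.ext fun j => ?_
      have h1 := hSy (y := D α (b j)) (s := p j) fun k hk =>
        sub_eq_zero.mp ((mul_eq_zero.mp (z2 α j k)).resolve_right (hsq hk))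
      simp only [LinearMap.comp_apply, OrthonormalBasis.coe_toBasis, h1, hS, map_smul]
    exact LinearMap.congr_fun this x
  · have : μ.compr₂ (symPart T) = μ ∘ₗ symPart T + μ.compl₂ (symPart T) := by
      refine b.toBasis.ext fun i => b.toBasis.ext fun j => ?_
      have h1 := hSy (y := μ (b i) (b j)) (s := p i + p j) fun k hk => by
        have := (mul_eq_zero.mp (z3 k i j)).resolve_right (hsq hk)
        linarith
      simp only [LinearMap.compr₂_apply, LinearMap.add_apply, LinearMap.comp_apply,
        LinearMap.compl₂_apply, OrthonormalBasis.coe_toBasis, h1, hS, map_smul,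
        LinearMap.smul_apply, ← add_smul]
      push_cast
      ring_nf
    intro x y
    exact LinearMap.congr_fun (LinearMap.congr_fun this x) y

end Core

/-! ### Vanishing of the brackets of the complement -/

section Kernel
variable {V : Type*} [NormedAddCommGroup V] [InnerProductSpace ℂ V] [FiniteDimensional ℂ V] {m : ℕ}
variable {ι : Type*} [Fintype ι]

/-- Commuting operators preserving a nonzero subspace have a common eigenvector in it. -/
theorem exists_common_eigenvector (D : ι → V →ₗ[ℂ] V) (W : Submodule ℂ V) (hW : W ≠ ⊥)
    (hD : ∀ α, ∀ x ∈ W, D α x ∈ W) (hc : ∀ α β, ∀ x ∈ W, D α (D β x) = D β (D α x)) :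
    ∃ X ∈ W, X ≠ 0 ∧ ∃ w : ι → ℂ, ∀ α, D α X = w α • X := by
  classical
  have key : ∀ s : Finset ι, ∃ U : Submodule ℂ V, U ≤ W ∧ U ≠ ⊥ ∧ (∀ α, ∀ x ∈ U, D α x ∈ U) ∧
      ∃ w : ι → ℂ, ∀ α ∈ s, ∀ x ∈ U, D α x = w α • x := by
    intro s
    induction s using Finset.induction_on with
    | empty => exact ⟨W, le_rfl, hW, hD, 0, by simp⟩
    | insert a s ha ih =>
      obtain ⟨U, hU, hU0, hUD, w, hw⟩ := ih
      have : Nontrivial U := Submodule.nontrivial_iff_ne_bot.mpr hU0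
      obtain ⟨z, hz⟩ := Module.End.exists_eigenvalue ((D a).restrict (hUD a))
      obtain ⟨u, hu⟩ := hz.exists_hasEigenvector
      refine ⟨U ⊓ LinearMap.ker (D a - z • LinearMap.id), inf_le_left.trans hU, ?_, ?_,
        Function.update w a z, ?_⟩
      · intro hbot
        have h1 := Subtype.ext_iff.mp hu.apply_eq_smul
        have h2 : (u : V) ∈ U ⊓ LinearMap.ker (D a - z • LinearMap.id) :=
          ⟨u.2, by simpa [sub_eq_zero] using h1⟩
        rw [hbot, Submodule.mem_bot] at h2
        exact hu.2 (Subtype.ext h2)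
      · rintro α x ⟨hx, hx'⟩
        refine ⟨hUD α x hx, ?_⟩
        simp only [LinearMap.mem_ker, SetLike.mem_coe, LinearMap.sub_apply, LinearMap.smul_apply,
          LinearMap.id_apply, sub_eq_zero] at hx' ⊢
        rw [hc a α x (hU hx), hx', map_smul]
      · rintro α hα x ⟨hx, hx'⟩
        simp only [LinearMap.mem_ker, SetLike.mem_coe, LinearMap.sub_apply, LinearMap.smul_apply,
          LinearMap.id_apply, sub_eq_zero] at hx'
        by_cases h : α = a
        · subst h; simpa using hx'
        · rw [Function.update_of_ne h]
          exact hw α ((Finset.mem_insert.mp hα).resolve_left h) x hx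
  obtain ⟨U, hU, hU0, -, w, hw⟩ := key Finset.univ
  obtain ⟨X, hX, hX0⟩ := U.ne_bot_iff.mp hU0
  exact ⟨X, hU hX, hX0, w, fun α => hw α (Finset.mem_univ _) X hX⟩

/-- The trace of the Ricci form against `A A†`. -/
theorem sum_rho (μ : V →ₗ[ℂ] V →ₗ[ℂ] V) (D : ι → V →ₗ[ℂ] V) (lam : ι → ι → V)
    (b : OrthonormalBasis (Fin m) ℂ V) (A : V →ₗ[ℂ] V) :
    4 * ∑ k, rho μ D lam b (A (b k)) =
      -2 * (∑ α, hs b (D α ∘ₗ A) + ∑ i, ∑ j, ‖μ (A (b i)) (b j)‖ ^ 2) +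
      (∑ α, ∑ β, ‖LinearMap.adjoint A (lam α β)‖ ^ 2
        + 2 * ∑ α, hs b (LinearMap.adjoint A ∘ₗ D α)
        + ∑ i, ∑ j, ‖LinearMap.adjoint A (μ (b i) (b j))‖ ^ 2) := by
  have e0 : ∑ k, ∑ α, ‖D α (A (b k))‖ ^ 2 = ∑ α, hs b (D α ∘ₗ A) := Finset.sum_comm
  have e1 : ∑ k, ∑ α, ∑ β, ‖⟪A (b k), lam α β⟫_ℂ‖ ^ 2 =
      ∑ α, ∑ β, ‖LinearMap.adjoint A (lam α β)‖ ^ 2 := by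
    rw [Finset.sum_comm]
    refine Finset.sum_congr rfl fun α _ => ?_
    rw [Finset.sum_comm]
    exact Finset.sum_congr rfl fun β _ => sum_norm_inner_map b A _
  have e2 : ∑ k, ∑ α, ∑ i, ‖⟪A (b k), D α (b i)⟫_ℂ‖ ^ 2 =
      ∑ α, hs b (LinearMap.adjoint A ∘ₗ D α) := by
    rw [Finset.sum_comm]
    refine Finset.sum_congr rfl fun α _ => ?_
    rw [Finset.sum_comm]
    exact Finset.sum_congr rfl fun i _ => sum_norm_inner_map b A _
  have e3 : ∑ k, ∑ i, ∑ j, ‖⟪A (b k), μ (b i) (b j)⟫_ℂ‖ ^ 2 =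
      ∑ i, ∑ j, ‖LinearMap.adjoint A (μ (b i) (b j))‖ ^ 2 := by
    rw [Finset.sum_comm]
    refine Finset.sum_congr rfl fun i _ => ?_
    rw [Finset.sum_comm]
    exact Finset.sum_congr rfl fun j _ => sum_norm_inner_map b A _
  simp only [rho, Finset.sum_add_distrib, ← Finset.mul_sum]
  rw [e0, e1, e2, e3]
  ring

variable {μ : V →ₗ[ℂ] V →ₗ[ℂ] V} {D : ι → V →ₗ[ℂ] V} {lam : ι → ι → V} {T : V →ₗ[ℂ] V} {κ : ℝ}

/-- Tracing the Ricci equation against `A A† - A† A`, with `A = ad X` for a joint eigenvector `X`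
in the kernel of the symmetric part of `T` that commutes with the `lam α β`, shows that `A†` is a
derivation: the derivation defect of `A†` and the differences `‖[D α, A†]‖² - ‖[D α, A]‖²` are
nonnegative terms of a sum that is at most zero. -/
theorem EinData.adjoint_isDer (h : EinData μ D lam T κ m) {X : V} {w : ι → ℂ}
    (hSD : IsDer μ (symPart T)) (hSX : symPart T X = 0) (hX : ∀ α, D α X = w α • X)
    (hlam : ∀ α β, μ X (lam α β) = 0) : IsDer μ (LinearMap.adjoint (μ X)) := by
  set b : OrthonormalBasis (Fin m) ℂ V :=
    (stdOrthonormalBasis ℂ V).reindex (finCongr h.dim)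
  set A := μ X with hA
  set A' := LinearMap.adjoint A with hA'
  have hA'' : LinearMap.adjoint A' = A := LinearMap.adjoint_adjoint A
  set S := symPart T with hS
  have hSadj : LinearMap.adjoint S = S := symPart_adjoint T
  have hDA : ∀ α, D α ∘ₗ A - A ∘ₗ D α = w α • A := by
    intro α
    ext y
    simp only [LinearMap.sub_apply, LinearMap.comp_apply, LinearMap.smul_apply, hA]
    rw [h.derD, hX, map_smul, LinearMap.smul_apply]
    abel
  have hSA : ∀ y, S (A y) = A (S y) := by
    intro y
    rw [hA, hSD, hSX]; simp
  have hSA' : A' ∘ₗ S = S ∘ₗ A' := by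
    have h1 : LinearMap.adjoint (S ∘ₗ A) = LinearMap.adjoint (A ∘ₗ S) := by
      congr 1; ext y; exact hSA y
    rwa [LinearMap.adjoint_comp, LinearMap.adjoint_comp, hSadj] at h1
  have hdA : ∀ x y, defect μ A x y = 0 := fun x y => by
    rw [defect, h.derμ X x y, sub_self]
  -- the two Ricci traces agree because `S` commutes with `A`
  have hric : ∑ k, rho μ D lam b (A (b k)) = ∑ k, rho μ D lam b (A' (b k)) := by
    have h1 : ∀ C : V →ₗ[ℂ] V, ∑ k, rho μ D lam b (C (b k)) =
        -κ * hs b C + (∑ k, ⟪C (b k), S (C (b k))⟫_ℂ).re := by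
      intro C
      simp only [h.ricci, ← re_inner_symPart T, Finset.sum_add_distrib, ← Finset.mul_sum,
        Complex.re_sum]
      rfl
    rw [h1, h1, hs_adjoint]
    congr 2
    rw [sum_shift b A S A]
    refine Finset.sum_congr rfl fun k _ => ?_
    rw [← LinearMap.comp_apply S, ← hSA', LinearMap.comp_apply, hA', LinearMap.adjoint_inner_right]
  have e1 := sum_rho μ D lam b A
  have e2 := sum_rho μ D lam b A'
  rw [hA'', ← hric, e1] at e2
  have e3 := defect_sub b μ h.skew A
  have e4 : ∑ i, ∑ j, ‖defect μ A (b i) (b j)‖ ^ 2 = 0 := by simp [hdA]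
  have e5 : ∑ α, ∑ β, ‖A (lam α β)‖ ^ 2 = 0 := by simp [hlam]
  have e6 : 0 ≤ ∑ α, ∑ β, ‖A' (lam α β)‖ ^ 2 := by positivity
  have e7 : 0 ≤ ∑ i, ∑ j, ‖defect μ A' (b i) (b j)‖ ^ 2 := by positivity
  have e8 : 0 ≤ ∑ α, hs b (D α ∘ₗ A') + ∑ α, hs b (A' ∘ₗ D α)
      - ∑ α, hs b (D α ∘ₗ A) - ∑ α, hs b (A ∘ₗ D α) := by
    simp only [← Finset.sum_add_distrib, ← Finset.sum_sub_distrib]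
    refine Finset.sum_nonneg fun α _ => ?_
    rw [← hs_comm_sub b (D α) A]
    exact sub_nonneg.mpr (hs_comm_le b (D α) A (w α) (hDA α))
  rw [← hA', e4] at e3
  have e9 : ∑ i, ∑ j, ‖defect μ A' (b i) (b j)‖ ^ 2 = 0 := by linarith
  have e10 : ∀ i j, defect μ A' (b i) (b j) = 0 := by
    intro i j
    have a1 := (Finset.sum_eq_zero_iff_of_nonneg fun i _ => Finset.sum_nonneg fun j _ =>
      sq_nonneg ‖defect μ A' (b i) (b j)‖).mp e9 i (Finset.mem_univ _)
    have a2 := (Finset.sum_eq_zero_iff_of_nonneg fun j _ =>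
      sq_nonneg ‖defect μ A' (b i) (b j)‖).mp a1 j (Finset.mem_univ _)
    simpa using a2
  have : μ.compr₂ A' = μ ∘ₗ A' + μ.compl₂ A' := by
    refine b.toBasis.ext fun i => b.toBasis.ext fun j => ?_
    simpa [defect, sub_eq_zero] using e10 i j
  exact fun x y => LinearMap.congr_fun (LinearMap.congr_fun this x) y

/-- A derivation adjoint to `ad X` in a nilpotent algebra forces `ad X = 0`: the composition is
nilpotent because both factors respect the lower central series and `ad X` raises it. -/
theorem eq_zero_of_adjoint_isDer (hm : finrank ℂ V = m) {X : V}
    (hnil : ∃ k, lcs μ k = ⊥) (hA : IsDer μ (LinearMap.adjoint (μ X))) : μ X = 0 := by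
  obtain ⟨k, hk⟩ := hnil
  set b : OrthonormalBasis (Fin m) ℂ V :=
    (stdOrthonormalBasis ℂ V).reindex (finCongr hm)
  set A := μ X with hA_def
  have hpow : ∀ n x, ((A ∘ₗ LinearMap.adjoint A) ^ n) x ∈ lcs μ n := by
    intro n
    induction n with
    | zero => intro x; trivial
    | succ n ih =>
      intro x
      rw [pow_succ', Module.End.mul_apply, LinearMap.comp_apply]
      exact mul_mem_lcs μ X (hA.lcs_mem n _ (ih x))
  have hnil : IsNilpotent (A ∘ₗ LinearMap.adjoint A) := ⟨k, by
    ext x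
    have := hpow k x
    rw [hk, Submodule.mem_bot] at this
    simpa using this⟩
  have htr : LinearMap.trace ℂ V (A ∘ₗ LinearMap.adjoint A) = 0 :=
    (LinearMap.isNilpotent_trace_of_isNilpotent hnil).eq_zero
  have h0 : ((hs b (LinearMap.adjoint A) : ℝ) : ℂ) = 0 := by
    rw [← htr, LinearMap.trace_eq_sum_inner _ b, hs_eq_sum_inner]
    refine Finset.sum_congr rfl fun i _ => ?_
    rw [LinearMap.comp_apply, LinearMap.adjoint_inner_left]
  rw [hs_adjoint] at h0
  exact hs_eq_zero (Complex.ofReal_eq_zero.mp h0)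

/-- The Ricci form is nonnegative on central joint eigenvectors. -/
theorem rho_nonneg (b : OrthonormalBasis (Fin m) ℂ V) {X : V} {w : ι → ℂ}
    (hX : ∀ α, D α X = w α • X) (hμ : μ X = 0) : 0 ≤ rho μ D lam b X := by
  have h1 : ∀ α, ‖D α X‖ ^ 2 ≤ ∑ i, ‖⟪X, D α (b i)⟫_ℂ‖ ^ 2 := by
    intro α
    have e : ∑ i, ‖⟪X, D α (b i)⟫_ℂ‖ ^ 2 = ‖LinearMap.adjoint (D α) X‖ ^ 2 := by
      rw [← sum_norm_inner_map b]
      exact Finset.sum_congr rfl fun i _ => by rw [norm_inner_symm]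
    rw [e]
    refine pow_le_pow_left₀ (norm_nonneg _) ?_ 2
    have h2 : ⟪X, LinearMap.adjoint (D α) X⟫_ℂ = starRingEnd ℂ (w α) * ⟪X, X⟫_ℂ := by
      rw [LinearMap.adjoint_inner_right, hX, inner_smul_left]
    have h3 := norm_inner_le_norm (𝕜 := ℂ) X (LinearMap.adjoint (D α) X)
    rw [h2, norm_mul, RCLike.norm_conj, inner_self_eq_norm_sq_to_K] at h3
    rw [hX, norm_smul]
    by_cases h0 : ‖X‖ = 0
    · rw [h0, mul_zero]; exact norm_nonneg _
    · have hp : 0 < ‖X‖ := lt_of_le_of_ne (norm_nonneg _) (Ne.symm h0)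
      simp only [norm_pow, Complex.coe_algebraMap, Complex.norm_real, norm_norm] at h3
      nlinarith
  have h2 : ∑ α, ‖D α X‖ ^ 2 ≤ ∑ α, ∑ i, ‖⟪X, D α (b i)⟫_ℂ‖ ^ 2 :=
    Finset.sum_le_sum fun α _ => h1 α
  have h3 : 0 ≤ ∑ α, ∑ β, ‖⟪X, lam α β⟫_ℂ‖ ^ 2 := by positivity
  have h4 : 0 ≤ ∑ i, ∑ j, ‖⟪X, μ (b i) (b j)⟫_ℂ‖ ^ 2 := by positivity
  simp only [rho, hμ, LinearMap.zero_apply, norm_zero]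
  simp only [ne_eq, OfNat.ofNat_ne_zero, not_false_eq_true, zero_pow, Finset.sum_const_zero]
  linarith

/-- A nonzero `lam α β` would make the kernel of the symmetric part `S` of `T` nonzero. The `D α`
then have a joint eigenvector `X` in the centre of the subalgebra `ker S`; it is central in `V` by
`EinData.adjoint_isDer`, and the sign of the Ricci form at `X` gives a contradiction. -/
theorem EinData.lam_eq_zero (h : EinData μ D lam T κ m) (α β : ι) : lam α β = 0 := by
  obtain ⟨hSlam, hSD, hSder⟩ := h.rigid
  by_contra hne
  set S := symPart T
  obtain ⟨K, hK⟩ := h.nilp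
  -- the last nonzero term of the lower central series restricted to `ker S`
  have hex : ∃ k, LinearMap.ker S ⊓ lcs μ k = ⊥ := ⟨K, by rw [hK, inf_bot_eq]⟩
  classical
  obtain ⟨x, hx, hx0⟩ : ∃ x ∈ LinearMap.ker S ⊓ lcs μ (Nat.find hex - 1), x ≠ 0 := by
    by_cases h0 : Nat.find hex = 0
    · rw [h0]
      exact ⟨lam α β, ⟨hSlam α β, trivial⟩, hne⟩
    · exact (Submodule.ne_bot_iff _).mp (Nat.find_min hex (Nat.sub_one_lt h0))
  have hfind : 1 ≤ Nat.find hex := by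
    rw [Nat.one_le_iff_ne_zero]
    intro h0
    have := Nat.find_spec hex
    rw [h0] at this
    have h1 : lam α β ∈ LinearMap.ker S ⊓ lcs μ 0 := ⟨hSlam α β, trivial⟩
    rw [this] at h1
    exact hne h1
  -- the centre of the subalgebra `ker S`
  let W : Submodule ℂ V :=
    { carrier := {x | S x = 0 ∧ ∀ y, S y = 0 → μ x y = 0}
      add_mem' := fun {a c} ha hc => ⟨by rw [map_add, ha.1, hc.1, add_zero], fun y hy => by
        rw [map_add, LinearMap.add_apply, ha.2 y hy, hc.2 y hy, add_zero]⟩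
      zero_mem' := ⟨map_zero _, fun y _ => by simp⟩
      smul_mem' := fun r a ha => ⟨by rw [map_smul, ha.1, smul_zero], fun y hy => by
        rw [map_smul, LinearMap.smul_apply, ha.2 y hy, smul_zero]⟩ }
  have hWbot : W ≠ ⊥ := by
    refine (Submodule.ne_bot_iff _).mpr ⟨x, ⟨hx.1, fun y hy => ?_⟩, hx0⟩
    have h1 : μ y x ∈ LinearMap.ker S ⊓ lcs μ (Nat.find hex) := by
      refine ⟨?_, ?_⟩
      · rw [SetLike.mem_coe, LinearMap.mem_ker, hSder, hy, LinearMap.mem_ker.mp hx.1]; simp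
      · have := mul_mem_lcs μ y hx.2
        rwa [Nat.sub_add_cancel hfind] at this
    rw [Nat.find_spec hex, Submodule.mem_bot] at h1
    rw [h.skew, h1, neg_zero]
  obtain ⟨X, hXW, hX0, w, hw⟩ := exists_common_eigenvector D W hWbot
    (by
      rintro γ a ⟨ha, ha'⟩
      refine ⟨by rw [hSD, ha, map_zero], fun y hy => ?_⟩
      have h1 := h.derD γ a y
      rw [ha' y hy, ha' (D γ y) (by rw [hSD, hy, map_zero]), map_zero, add_zero] at h1
      exact h1.symm)
    (by
      rintro γ δ a ⟨ha, ha'⟩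
      rw [← sub_eq_zero, h.comm, h.skew, ha' _ (hSlam γ δ), neg_zero])
  have hμX : μ X = 0 := eq_zero_of_adjoint_isDer h.dim h.nilp
    (h.adjoint_isDer hSder hXW.1 hw fun γ δ => hXW.2 _ (hSlam γ δ))
  set b : OrthonormalBasis (Fin m) ℂ V :=
    (stdOrthonormalBasis ℂ V).reindex (finCongr h.dim)
  have h1 := rho_nonneg (lam := lam) b hw hμX
  have h2 : (⟪X, symPart T X⟫_ℂ).re = 0 := by
    rw [show symPart T X = 0 from hXW.1, inner_zero_right, Complex.zero_re]
  rw [h.ricci, ← re_inner_symPart, h2] at h1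
  have h3 : 0 < ‖X‖ := norm_pos_iff.mpr hX0
  nlinarith [mul_pos h.pos (pow_pos h3 2)]

end Kernel

/-! ### A chain of ideals for a solvable Lie algebra -/

section LieNilpotent
open LieAlgebra LieModule TensorProduct

/-- Lie's theorem: the derived algebra of a solvable Lie algebra acts by nilpotent operators. -/
theorem isNilpotent_toEnd_of_mem_derived {K 𝔤 : Type*} [Field K] [CharZero K] [IsAlgClosed K]
    [LieRing 𝔤] [LieAlgebra K 𝔤] [IsSolvable 𝔤] (n : ℕ) :
    ∀ (M : Type*) [AddCommGroup M] [Module K M] [FiniteDimensional K M] [LieRingModule 𝔤 M]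
      [LieModule K 𝔤 M], finrank K M ≤ n →
      ∀ x ∈ derivedSeries K 𝔤 1, IsNilpotent (toEnd K 𝔤 M x) := by
  induction n with
  | zero =>
    intro M _ _ _ _ _ hM x _
    have : Subsingleton M := finrank_zero_iff.mp (Nat.le_zero.mp hM)
    exact ⟨1, Subsingleton.elim _ _⟩
  | succ n ih =>
    intro M _ _ _ _ _ hM x hx
    rcases subsingleton_or_nontrivial M with hs | hs
    · exact ⟨1, Subsingleton.elim _ _⟩
    obtain ⟨χ, hχ⟩ := exists_nontrivial_weightSpace_of_isSolvable K 𝔤 M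
    obtain ⟨⟨v, hv⟩, hv0⟩ := exists_ne (0 : weightSpace M χ)
    have hv0 : v ≠ 0 := fun h => hv0 (Subtype.ext h)
    rw [mem_weightSpace] at hv
    let N : LieSubmodule K 𝔤 M :=
      { toSubmodule := K ∙ v
        lie_mem := by
          intro y z hz
          obtain ⟨r, rfl⟩ := Submodule.mem_span_singleton.mp hz
          rw [lie_smul, hv]
          exact Submodule.smul_mem _ _ (Submodule.smul_mem _ _ (Submodule.mem_span_singleton_self v)) }
    have hker : ∀ y ∈ derivedSeries K 𝔤 1, ⁅y, v⁆ = 0 := by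
      intro y hy
      have hle : (derivedSeries K 𝔤 1).toSubmodule ≤ LinearMap.ker χ := by
        rw [derivedSeries_def, derivedSeriesOfIdeal_succ, LieSubmodule.lieIdeal_oper_eq_linear_span',
          Submodule.span_le]
        rintro _ ⟨a, -, c, -, rfl⟩
        have h1 : ⁅⁅a, c⁆, v⁆ = 0 := by
          rw [lie_lie, hv, hv, lie_smul, lie_smul, hv, hv, smul_comm, sub_self]
        rw [hv] at h1
        exact (smul_eq_zero.mp h1).resolve_right hv0
      rw [hv, show χ y = 0 from hle hy, zero_smul]
    have hfin : finrank K (M ⧸ N) ≤ n := by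
      have h1 := N.toSubmodule.finrank_quotient_add_finrank
      have h2 : finrank K N.toSubmodule = 1 := finrank_span_singleton hv0
      have h3 : finrank K (M ⧸ N) = finrank K (M ⧸ N.toSubmodule) := rfl
      omega
    obtain ⟨k, hk⟩ := ih (M ⧸ N) hfin x hx
    refine ⟨k + 1, ?_⟩
    ext z
    have h1 : ∀ (j : ℕ) (z : M), (LieSubmodule.Quotient.mk' N) ((toEnd K 𝔤 M x ^ j) z) =
        (toEnd K 𝔤 (M ⧸ N) x ^ j) (LieSubmodule.Quotient.mk' N z) := by
      intro j
      induction j with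
      | zero => intro z; rfl
      | succ j ihj =>
        intro z
        rw [pow_succ', pow_succ', Module.End.mul_apply, Module.End.mul_apply, toEnd_apply_apply,
          toEnd_apply_apply, LieModuleHom.map_lie, ihj]
    have h2 := h1 k z
    rw [hk, LinearMap.zero_apply] at h2
    have h3 : (toEnd K 𝔤 M x ^ k) z ∈ N := (LieSubmodule.Quotient.mk_eq_zero N).mp h2
    obtain ⟨r, hr⟩ := Submodule.mem_span_singleton.mp h3
    rw [pow_succ', Module.End.mul_apply, ← hr, toEnd_apply_apply, lie_smul, hker x hx, smul_zero,
      LinearMap.zero_apply]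

/-- The derived algebra of a solvable Lie algebra over any field of characteristic zero acts
nilpotently: its elements do so individually after base change, and Engel's theorem applies. -/
theorem isNilpotent_derived {R 𝔤 : Type*} [Field R] [CharZero R] [LieRing 𝔤] [LieAlgebra R 𝔤]
    [FiniteDimensional R 𝔤] [IsSolvable 𝔤] : LieModule.IsNilpotent (derivedSeries R 𝔤 1) 𝔤 := by
  set A := AlgebraicClosure R
  rw [isNilpotent_iff_forall' (R := R)]
  intro ⟨x, hx⟩
  have hx_ext : 1 ⊗ₜ[R] x ∈ derivedSeries A (A ⊗[R] 𝔤) 1 := by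
    rw [derivedSeries_baseChange]
    exact Submodule.tmul_mem_baseChange_of_mem 1 hx
  have hbc_inj : Function.Injective (End.baseChangeHom R A 𝔤) :=
    LinearMap.baseChangeHom_injective R 𝔤 A
  have aux : (toEnd R (derivedSeries R 𝔤 1) 𝔤 ⟨x, hx⟩).baseChangeHom R A 𝔤 =
      (toEnd R 𝔤 𝔤 x).baseChange A := rfl
  rw [← IsNilpotent.map_iff hbc_inj, aux, ← toEnd_baseChange]
  exact isNilpotent_toEnd_of_mem_derived _ (A ⊗[R] 𝔤) le_rfl _ hx_ext

/-- The Lie ring with underlying space `L` and bracket `br`. -/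
abbrev lieRingOf (br : L →ₗ[ℝ] L →ₗ[ℝ] L) (hskew : ∀ x y : L, br x y = - br y x)
    (hjacobi : ∀ x y z : L, br (br x y) z + br (br y z) x + br (br z x) y = 0) : LieRing L where
  bracket x y := br x y
  add_lie x y z := by simp
  lie_add x y z := by simp
  lie_self x := by
    have h := hskew x x
    have h2 : (2 : ℝ) • br x x = 0 := by rw [two_smul]; nth_rewrite 1 [h]; simp
    exact (smul_eq_zero.mp h2).resolve_left two_ne_zero
  leibniz_lie x y z := by
    have h := hjacobi x y z
    change br x (br y z) = br (br x y) z + br y (br x z)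
    rw [hskew x (br y z), hskew y (br x z), hskew x z, map_neg, LinearMap.neg_apply, neg_neg]
    have := add_eq_zero_iff_eq_neg.mp h
    rw [← sub_eq_zero]
    rw [← neg_eq_zero, ← h]
    abel

/-- In a solvable Lie algebra the derived algebra acts nilpotently: there is a descending chain of
ideals which the derived algebra pushes down. -/
theorem exists_chain (br : L →ₗ[ℝ] L →ₗ[ℝ] L) (hskew : ∀ x y : L, br x y = - br y x)
    (hjacobi : ∀ x y z : L, br (br x y) z + br (br y z) x + br (br z x) y = 0)
    (hsolv : ∃ k, derSeries br k = ⊥) :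
    ∃ C : ℕ → Submodule ℝ L, C 0 = ⊤ ∧ (∃ k, C k = ⊥) ∧
      (∀ k, ∀ x, ∀ y ∈ C k, br x y ∈ C k) ∧
      (∀ k, ∀ x ∈ bracketSpan br ⊤ ⊤, ∀ y ∈ C k, br x y ∈ C (k + 1)) := by
  let : LieRing L := lieRingOf br hskew hjacobi
  let : LieAlgebra ℝ L := { lie_smul := fun t x y => (br x).map_smul t y }
  have hder : ∀ k, derSeries br k = (derivedSeries ℝ L k).toSubmodule := by
    intro k
    induction k with
    | zero => rfl
    | succ k ih =>
      rw [derivedSeries_def, derivedSeriesOfIdeal_succ, LieSubmodule.lieIdeal_oper_eq_linear_span',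
        derSeries, bracketSpan, ih]
      congr 1
      ext z
      constructor
      · rintro ⟨x, hx, y, hy, rfl⟩; exact ⟨x, hx, y, hy, rfl⟩
      · rintro ⟨x, hx, y, hy, rfl⟩; exact ⟨x, hx, y, hy, rfl⟩
  obtain ⟨k, hk⟩ := hsolv
  have hsol : IsSolvable L := IsSolvable.mk (R := ℝ) (k := k) (by
    rw [← LieSubmodule.toSubmodule_eq_bot, ← hder, hk])
  have hnil := isNilpotent_derived (R := ℝ) (𝔤 := L)
  obtain ⟨K, hK⟩ := (isNilpotent_iff ℝ (derivedSeries ℝ L 1) L).mp hnil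
  refine ⟨fun k => ((derivedSeries ℝ L 1).lcs L k).toSubmodule, rfl, ⟨K, ?_⟩, ?_, ?_⟩
  · simp only [LieIdeal.coe_lcs_eq, hK]; rfl
  · intro k x y hy
    exact LieSubmodule.lie_mem _ hy
  · intro k x hx y hy
    have hx' : x ∈ derivedSeries ℝ L 1 := by
      have := hder 1
      change bracketSpan br ⊤ ⊤ = _ at this
      rw [this] at hx
      exact hx
    have : ⁅x, y⁆ ∈ (derivedSeries ℝ L 1).lcs L (k + 1) := by
      rw [LieIdeal.lcs_succ]
      exact LieSubmodule.lie_mem_lie hx' hy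
    exact this

end LieNilpotent

/-! ### The Einstein equation on a real metric Lie algebra -/

section RealPart

/-- An orthonormal basis adapted to a subspace and its orthogonal complement. -/
theorem exists_split_basis (N : Submodule ℝ L) :
    ∃ (p q : ℕ) (x : OrthonormalBasis (Fin p ⊕ Fin q) ℝ L),
      (∀ i, x (Sum.inl i) ∈ N) ∧ ∀ α, x (Sum.inr α) ∈ Nᗮ := by
  let e := stdOrthonormalBasis ℝ N
  let a := stdOrthonormalBasis ℝ Nᗮ
  let f : Fin (finrank ℝ N) ⊕ Fin (finrank ℝ Nᗮ) → L :=
    Sum.elim (fun i => (e i : L)) fun α => (a α : L)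
  have hf : Orthonormal ℝ f := by
    rw [orthonormal_iff_ite]
    rintro (i | α) (j | β)
    · simpa [f] using (orthonormal_iff_ite.mp e.orthonormal i j)
    · simpa [f] using N.inner_right_of_mem_orthogonal (e i).2 (a β).2
    · simpa [f] using N.inner_left_of_mem_orthogonal (e j).2 (a α).2
    · simpa [f] using (orthonormal_iff_ite.mp a.orthonormal α β)
  have hspan : ⊤ ≤ Submodule.span ℝ (Set.range f) := by
    have h1 : N ≤ Submodule.span ℝ (Set.range f) := by
      intro y hy
      have h2 := e.sum_repr' ⟨y, hy⟩
      have h3 : y = ∑ i, ⟪e i, ⟨y, hy⟩⟫_ℝ • (e i : L) := by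
        have := congrArg Subtype.val h2
        simpa using this.symm
      rw [h3]
      exact Submodule.sum_mem _ fun i _ => Submodule.smul_mem _ _
        (Submodule.subset_span ⟨Sum.inl i, rfl⟩)
    have h1' : Nᗮ ≤ Submodule.span ℝ (Set.range f) := by
      intro y hy
      have h2 := a.sum_repr' ⟨y, hy⟩
      have h3 : y = ∑ i, ⟪a i, ⟨y, hy⟩⟫_ℝ • (a i : L) := by
        have := congrArg Subtype.val h2
        simpa using this.symm
      rw [h3]
      exact Submodule.sum_mem _ fun i _ => Submodule.smul_mem _ _
        (Submodule.subset_span ⟨Sum.inr i, rfl⟩)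
    rw [← Submodule.sup_orthogonal_of_hasOrthogonalProjection (K := N)]
    exact sup_le h1 h1'
  refine ⟨_, _, OrthonormalBasis.mk hf hspan, fun i => ?_, fun α => ?_⟩
  · simp [f]
  · rw [OrthonormalBasis.coe_mk]; exact (a α).2

/-- A solvable metric Lie algebra satisfying the Einstein equation. -/
structure EinAlg (br : L →ₗ[ℝ] L →ₗ[ℝ] L) (𝔫 : Submodule ℝ L) (H : L) (B R : L →ₗ[ℝ] L)
    (c : ℝ) : Prop where
  skew : ∀ x y : L, br x y = - br y x
  jacobi : ∀ x y z : L, br (br x y) z + br (br y z) x + br (br z x) y = 0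
  solv : ∃ k, derSeries br k = ⊥
  hn : 𝔫 = bracketSpan br ⊤ ⊤
  hH : H ∈ 𝔫ᗮ
  mean : ∀ A ∈ 𝔫ᗮ, ⟪H, A⟫_ℝ = LinearMap.trace ℝ L (br A)
  hB : ∀ x y : L, ⟪B x, y⟫_ℝ = LinearMap.trace ℝ L (br x ∘ₗ br y)
  hR : ∀ {ι : Type} [Fintype ι] (b : OrthonormalBasis ι ℝ L) (x y : L),
      ⟪R x, y⟫_ℝ =
        -(1/2 : ℝ) * ∑ i, ∑ j, ⟪br x (b i), b j⟫_ℝ * ⟪br y (b i), b j⟫_ℝ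
          + (1/4 : ℝ) * ∑ i, ∑ j, ⟪br (b i) (b j), x⟫_ℝ * ⟪br (b i) (b j), y⟫_ℝ
  ein : R - (1/2 : ℝ) • B - (1/2 : ℝ) • (br H + LinearMap.adjoint (br H))
      = c • (LinearMap.id : L →ₗ[ℝ] L)

variable {br : L →ₗ[ℝ] L →ₗ[ℝ] L} {𝔫 : Submodule ℝ L} {H : L} {B R : L →ₗ[ℝ] L} {c : ℝ}

theorem EinAlg.br_mem (h : EinAlg br 𝔫 H B R c) (x y : L) : br x y ∈ 𝔫 := by
  rw [h.hn]; exact Submodule.subset_span ⟨x, trivial, y, trivial, rfl⟩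

theorem EinAlg.der (h : EinAlg br 𝔫 H B R c) (x y z : L) :
    br x (br y z) = br (br x y) z + br y (br x z) := by
  rw [h.skew x (br y z), h.skew y (br x z), h.skew x z, map_neg, LinearMap.neg_apply, neg_neg,
    ← sub_eq_zero, ← neg_eq_zero, ← h.jacobi x y z]
  abel

/-- The Killing form vanishes on `[𝔰, 𝔰]`. -/
theorem EinAlg.killing_eq_zero (h : EinAlg br 𝔫 H B R c) {x : L} (hx : x ∈ 𝔫) : B x = 0 := by
  obtain ⟨C, h0, ⟨K, hK⟩, hC, hC'⟩ := exists_chain br h.skew h.jacobi h.solv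
  refine ext_inner_right ℝ fun y => ?_
  rw [h.hB, inner_zero_left]
  have hpow : ∀ n z, ((br x ∘ₗ br y) ^ n) z ∈ C n := by
    intro n
    induction n with
    | zero => intro z; rw [h0]; trivial
    | succ n ih =>
      intro z
      rw [pow_succ', Module.End.mul_apply, LinearMap.comp_apply]
      exact hC' n x (h.hn ▸ hx) _ (hC n y _ (ih z))
  have hnil : IsNilpotent (br x ∘ₗ br y) := ⟨K, by
    ext z
    have := hpow K z
    rw [hK, Submodule.mem_bot] at this
    simpa using this⟩
  exact (LinearMap.isNilpotent_trace_of_isNilpotent hnil).eq_zero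

theorem real_sum_mul {ι : Type} [Fintype ι] (b : OrthonormalBasis ι ℝ L) (x y : L) :
    ∑ j, ⟪x, b j⟫_ℝ * ⟪y, b j⟫_ℝ = ⟪x, y⟫_ℝ := by
  rw [← b.sum_inner_mul_inner x y]
  exact Finset.sum_congr rfl fun j _ => by rw [real_inner_comm y]

/-- The Ricci equation as an identity of quadratic forms. -/
theorem EinAlg.ricci (h : EinAlg br 𝔫 H B R c) (x : L) :
    ⟪R x, x⟫_ℝ - (1/2) * ⟪B x, x⟫_ℝ - ⟪x, br H x⟫_ℝ = c * ‖x‖ ^ 2 := by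
  have h1 := congrArg (fun f => ⟪f x, x⟫_ℝ) h.ein
  simp only [LinearMap.sub_apply, LinearMap.smul_apply, LinearMap.add_apply, inner_sub_left,
    inner_smul_left, inner_add_left, LinearMap.adjoint_inner_left, LinearMap.id_apply,
    real_inner_self_eq_norm_sq, conj_trivial, real_inner_comm x (br H x)] at h1
  rw [← h1]; ring

theorem trace_eq_sum {ι : Type} [Fintype ι] (b : OrthonormalBasis ι ℝ L) (A : L →ₗ[ℝ] L) :
    LinearMap.trace ℝ L A = ∑ i, ⟪b i, A (b i)⟫_ℝ := LinearMap.trace_eq_sum_inner A b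

theorem EinAlg.R_self {ι : Type} [Fintype ι] (h : EinAlg br 𝔫 H B R c)
    (b : OrthonormalBasis ι ℝ L) (x : L) :
    ⟪R x, x⟫_ℝ = -(1/2) * ∑ i, ‖br x (b i)‖ ^ 2 + (1/4) * ∑ i, ∑ j, ⟪br (b i) (b j), x⟫_ℝ ^ 2 := by
  rw [h.hR b]
  simp only [real_sum_mul, real_inner_self_eq_norm_sq]
  simp only [← sq]

/-- `‖A + A†‖² = 2 (‖A‖² + tr A²)`, the combination of `R` and the Killing form in the Ricci
operator on the complement. -/
theorem norm_add_adjoint {ι : Type} [Fintype ι] (b : OrthonormalBasis ι ℝ L) (A : L →ₗ[ℝ] L) :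
    ∑ i, ‖(A + LinearMap.adjoint A) (b i)‖ ^ 2 =
      2 * (∑ i, ‖A (b i)‖ ^ 2 + LinearMap.trace ℝ L (A ∘ₗ A)) := by
  have e1 : ∀ i, ‖(A + LinearMap.adjoint A) (b i)‖ ^ 2 =
      ‖A (b i)‖ ^ 2 + 2 * ⟪b i, A (A (b i))⟫_ℝ + ‖LinearMap.adjoint A (b i)‖ ^ 2 := by
    intro i
    rw [LinearMap.add_apply, norm_add_sq_real, LinearMap.adjoint_inner_right, real_inner_comm]
  have e2 : ∑ i, ‖LinearMap.adjoint A (b i)‖ ^ 2 = ∑ i, ‖A (b i)‖ ^ 2 := by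
    have f1 : ∀ i, ‖LinearMap.adjoint A (b i)‖ ^ 2 = ∑ j, ⟪b j, LinearMap.adjoint A (b i)⟫_ℝ ^ 2 := by
      intro i
      rw [← b.sum_sq_norm_inner_right]; simp
    have f2 : ∀ i, ‖A (b i)‖ ^ 2 = ∑ j, ⟪b j, A (b i)⟫_ℝ ^ 2 := by
      intro i
      rw [← b.sum_sq_norm_inner_right]; simp
    simp only [f1, f2]
    rw [Finset.sum_comm]
    exact Finset.sum_congr rfl fun i _ => Finset.sum_congr rfl fun j _ => by
      rw [LinearMap.adjoint_inner_right, real_inner_comm]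
  rw [trace_eq_sum b]
  simp only [e1, Finset.sum_add_distrib, ← Finset.mul_sum, e2, LinearMap.comp_apply]
  ring

/-- The Ricci equation on the complement of `[𝔰, 𝔰]`. -/
theorem EinAlg.ricci_compl {ι : Type} [Fintype ι] (h : EinAlg br 𝔫 H B R c)
    (b : OrthonormalBasis ι ℝ L) {a : L} (ha : a ∈ 𝔫ᗮ) :
    ∑ i, ‖(br a + LinearMap.adjoint (br a)) (b i)‖ ^ 2 = -4 * c * ‖a‖ ^ 2 := by
  have h0 : ∀ x y, ⟪br x y, a⟫_ℝ = 0 := fun x y =>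
    𝔫.inner_right_of_mem_orthogonal (h.br_mem x y) ha
  have h1 := h.ricci a
  rw [h.R_self b, h.hB, real_inner_comm, h0] at h1
  simp only [h0] at h1
  rw [norm_add_adjoint]
  simp at h1
  linarith

/-- A nonnegative Einstein constant makes all `ad a`, `a ∈ [𝔰, 𝔰]ᗮ`, skew-symmetric. -/
theorem EinAlg.abelian_of_nonneg (h : EinAlg br 𝔫 H B R c) (hc : 0 ≤ c) :
    ∀ x ∈ 𝔫ᗮ, ∀ y ∈ 𝔫ᗮ, br x y = 0 := by
  intro x hx y hy
  set b := stdOrthonormalBasis ℝ L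
  have h1 := h.ricci_compl b hx
  have h2 : ∑ i, ‖(br x + LinearMap.adjoint (br x)) (b i)‖ ^ 2 = 0 := by
    refine le_antisymm ?_ (Finset.sum_nonneg fun _ _ => sq_nonneg _)
    rw [h1]
    nlinarith [mul_nonneg hc (sq_nonneg ‖x‖)]
  have h3 : br x + LinearMap.adjoint (br x) = 0 := by
    refine b.toBasis.ext fun i => ?_
    have := (Finset.sum_eq_zero_iff_of_nonneg fun i _ => sq_nonneg
      ‖(br x + LinearMap.adjoint (br x)) (b i)‖).mp h2 i (Finset.mem_univ _)
    rw [sq_eq_zero_iff, norm_eq_zero] at this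
    simpa using this
  have h4 := congrArg (fun f => ⟪f y, br x y⟫_ℝ) h3
  simp only [LinearMap.add_apply, inner_add_left, LinearMap.adjoint_inner_left,
    LinearMap.zero_apply, inner_zero_left] at h4
  rw [𝔫.inner_left_of_mem_orthogonal (h.br_mem _ _) hy, add_zero, inner_self_eq_zero] at h4
  exact h4

/-- Pairing the Ricci equation with the derivation `ad H` computes the norm of its symmetric
part. -/
theorem EinAlg.trace_sym {ι : Type} [Fintype ι] (h : EinAlg br 𝔫 H B R c)
    (b : OrthonormalBasis ι ℝ L) :
    ∑ i, ‖((1/2 : ℝ) • (br H + LinearMap.adjoint (br H))) (b i)‖ ^ 2 =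
      -c * ∑ i, ⟪b i, br H (b i)⟫_ℝ := by
  set A := br H with hA
  have hRA : ∑ i, ⟪R (A (b i)), b i⟫_ℝ = 0 := by
    have e1 : ∀ k, ⟪R (A (b k)), b k⟫_ℝ = -(1/2) * ∑ i, ⟪br (A (b k)) (b i), br (b k) (b i)⟫_ℝ
        + (1/4) * ∑ i, ∑ j, ⟪br (b i) (b j), A (b k)⟫_ℝ * ⟪br (b i) (b j), b k⟫_ℝ := by
      intro k
      rw [h.hR b]
      simp only [real_sum_mul]
    have e2 : ∑ k, ∑ i, ∑ j, ⟪br (b i) (b j), A (b k)⟫_ℝ * ⟪br (b i) (b j), b k⟫_ℝ =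
        ∑ i, ∑ j, ⟪A (br (b i) (b j)), br (b i) (b j)⟫_ℝ := by
      rw [Finset.sum_comm]
      refine Finset.sum_congr rfl fun i _ => ?_
      rw [Finset.sum_comm]
      refine Finset.sum_congr rfl fun j _ => ?_
      rw [← LinearMap.adjoint_inner_right, real_inner_comm, ← real_sum_mul b]
      exact Finset.sum_congr rfl fun k _ => by rw [LinearMap.adjoint_inner_left]
    have e3 : ∑ i, ∑ j, ⟪A (br (b i) (b j)), br (b i) (b j)⟫_ℝ =
        2 * ∑ i, ∑ j, ⟪br (A (b i)) (b j), br (b i) (b j)⟫_ℝ := by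
      have f1 : ∑ i, ∑ j, ⟪br (b i) (A (b j)), br (b i) (b j)⟫_ℝ =
          ∑ i, ∑ j, ⟪br (A (b i)) (b j), br (b i) (b j)⟫_ℝ := by
        rw [Finset.sum_comm]
        exact Finset.sum_congr rfl fun i _ => Finset.sum_congr rfl fun j _ => by
          rw [h.skew, h.skew (b j) (b i), inner_neg_neg]
      simp only [hA, h.der H, inner_add_left, Finset.sum_add_distrib] at f1 ⊢
      rw [f1]; ring
    simp only [e1, Finset.sum_add_distrib, ← Finset.mul_sum]
    rw [e2, e3]; ring
  have h1 : ∀ i, ⟪R (A (b i)), b i⟫_ℝ - (1/2) * (⟪A (A (b i)), b i⟫_ℝ + ‖A (b i)‖ ^ 2) =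
      c * ⟪b i, A (b i)⟫_ℝ := by
    intro i
    have h2 := congrArg (fun f => ⟪f (A (b i)), b i⟫_ℝ) h.ein
    simp only [LinearMap.sub_apply, LinearMap.smul_apply, LinearMap.add_apply, inner_sub_left,
      inner_smul_left, inner_add_left, LinearMap.adjoint_inner_left, LinearMap.id_apply,
      conj_trivial] at h2
    rw [h.killing_eq_zero (h.br_mem _ _), inner_zero_left, ← hA, real_inner_self_eq_norm_sq] at h2
    rw [real_inner_comm (A (b i)) (b i), ← h2]; ring
  have h2 : ∑ i, (⟪R (A (b i)), b i⟫_ℝ - (1/2) * (⟪A (A (b i)), b i⟫_ℝ + ‖A (b i)‖ ^ 2)) =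
      ∑ i, c * ⟪b i, A (b i)⟫_ℝ := Finset.sum_congr rfl fun i _ => h1 i
  rw [Finset.sum_sub_distrib, hRA, ← Finset.mul_sum, ← Finset.mul_sum, Finset.sum_add_distrib] at h2
  have h3 := norm_add_adjoint b A
  rw [trace_eq_sum b] at h3
  have h4 : ∑ i, ⟪b i, (A ∘ₗ A) (b i)⟫_ℝ = ∑ i, ⟪A (A (b i)), b i⟫_ℝ :=
    Finset.sum_congr rfl fun i _ => real_inner_comm _ _
  rw [h4] at h3
  have h5 : ∀ i, ‖((1/2 : ℝ) • (A + LinearMap.adjoint A)) (b i)‖ ^ 2 =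
      (1/4) * ‖(A + LinearMap.adjoint A) (b i)‖ ^ 2 := by
    intro i
    rw [LinearMap.smul_apply, norm_smul, mul_pow]; norm_num
  simp only [h5, ← Finset.mul_sum]
  rw [h3]
  linarith

/-- The Ricci equation on `[𝔰, 𝔰]`, in an adapted orthonormal basis. -/
theorem EinAlg.ricci_ideal {p q : ℕ} (h : EinAlg br 𝔫 H B R c)
    (b : OrthonormalBasis (Fin p ⊕ Fin q) ℝ L) {y : L} (hy : y ∈ 𝔫) :
    -(1/2) * (∑ α, ‖br (b (Sum.inr α)) y‖ ^ 2 + ∑ i, ‖br y (b (Sum.inl i))‖ ^ 2) +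
      (1/4) * (∑ α, ∑ β, ⟪y, br (b (Sum.inr α)) (b (Sum.inr β))⟫_ℝ ^ 2
        + 2 * ∑ α, ∑ i, ⟪y, br (b (Sum.inr α)) (b (Sum.inl i))⟫_ℝ ^ 2
        + ∑ i, ∑ j, ⟪y, br (b (Sum.inl i)) (b (Sum.inl j))⟫_ℝ ^ 2) =
      c * ‖y‖ ^ 2 + ⟪y, br H y⟫_ℝ := by
  have h1 := h.ricci y
  rw [h.killing_eq_zero hy, inner_zero_left, h.R_self b] at h1
  simp only [Fintype.sum_sum_type, Finset.sum_add_distrib] at h1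
  have e1 : ∑ α, ‖br y (b (Sum.inr α))‖ ^ 2 = ∑ α, ‖br (b (Sum.inr α)) y‖ ^ 2 :=
    Finset.sum_congr rfl fun α _ => by rw [h.skew, norm_neg]
  have e2 : ∑ i, ∑ α, ⟪br (b (Sum.inl i)) (b (Sum.inr α)), y⟫_ℝ ^ 2 =
      ∑ α, ∑ i, ⟪br (b (Sum.inr α)) (b (Sum.inl i)), y⟫_ℝ ^ 2 := by
    rw [Finset.sum_comm]
    exact Finset.sum_congr rfl fun α _ => Finset.sum_congr rfl fun i _ => by
      rw [h.skew, inner_neg_left, neg_sq]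
  rw [e1, e2] at h1
  simp only [fun u v : L => real_inner_comm (br u v) y] at h1 ⊢
  linarith

end RealPart

/-! ### Complexification -/

section RhoIndep
variable {V : Type*} [NormedAddCommGroup V] [InnerProductSpace ℂ V] [FiniteDimensional ℂ V] {m : ℕ}
variable {ι : Type*} [Fintype ι]

theorem sum_norm_inner_indep (b b' : OrthonormalBasis (Fin m) ℂ V) (A : V →ₗ[ℂ] V) (v : V) :
    ∑ i, ‖⟪v, A (b i)⟫_ℂ‖ ^ 2 = ∑ i, ‖⟪v, A (b' i)⟫_ℂ‖ ^ 2 :=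
  hs_indep b b' ((innerₛₗ ℂ v) ∘ₗ A)

/-- The Ricci form does not depend on the orthonormal basis used to compute it. -/
theorem rho_indep (μ : V →ₗ[ℂ] V →ₗ[ℂ] V) (D : ι → V →ₗ[ℂ] V) (lam : ι → ι → V)
    (b b' : OrthonormalBasis (Fin m) ℂ V) (v : V) :
    rho μ D lam b v = rho μ D lam b' v := by
  have h1 : ∑ i, ‖μ v (b i)‖ ^ 2 = ∑ i, ‖μ v (b' i)‖ ^ 2 := hs_indep b b' (μ v)
  have h2 : ∀ α, ∑ i, ‖⟪v, D α (b i)⟫_ℂ‖ ^ 2 = ∑ i, ‖⟪v, D α (b' i)⟫_ℂ‖ ^ 2 :=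
    fun α => sum_norm_inner_indep b b' (D α) v
  have h3 : ∑ i, ∑ j, ‖⟪v, μ (b i) (b j)⟫_ℂ‖ ^ 2 = ∑ i, ∑ j, ‖⟪v, μ (b' i) (b' j)⟫_ℂ‖ ^ 2 := by
    calc ∑ i, ∑ j, ‖⟪v, μ (b i) (b j)⟫_ℂ‖ ^ 2
        = ∑ i, ∑ j, ‖⟪v, μ (b i) (b' j)⟫_ℂ‖ ^ 2 :=
          Finset.sum_congr rfl fun i _ => sum_norm_inner_indep b b' (μ (b i)) v
      _ = ∑ j, ∑ i, ‖⟪v, μ (b i) (b' j)⟫_ℂ‖ ^ 2 := Finset.sum_comm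
      _ = ∑ j, ∑ i, ‖⟪v, μ (b' i) (b' j)⟫_ℂ‖ ^ 2 :=
          Finset.sum_congr rfl fun j _ => sum_norm_inner_indep b b' (μ.flip (b' j)) v
      _ = _ := Finset.sum_comm
  simp only [rho, h1, h2, h3]

end RhoIndep

section Complexify

variable {p q : ℕ}

/-- The projection of `L` onto the span of the vectors `b (inl i)`, followed by the inclusion into
its complexification, which is identified with `ℂᵖ` through that orthonormal basis. -/
def cx (b : OrthonormalBasis (Fin p ⊕ Fin q) ℝ L) : L →ₗ[ℝ] EuclideanSpace ℂ (Fin p) where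
  toFun x := WithLp.toLp 2 fun i => ((⟪b (Sum.inl i), x⟫_ℝ : ℝ) : ℂ)
  map_add' x y := by ext i; simp [inner_add_right]
  map_smul' r x := by ext i; simp [inner_smul_right]

/-- The complex-linear extension of an operator on `L`, compressed by `cx`. -/
def cxOp (b : OrthonormalBasis (Fin p ⊕ Fin q) ℝ L) (A : L →ₗ[ℝ] L) :
    EuclideanSpace ℂ (Fin p) →ₗ[ℂ] EuclideanSpace ℂ (Fin p) :=
  (EuclideanSpace.basisFun (Fin p) ℂ).toBasis.constr ℂ fun i => cx b (A (b (Sum.inl i)))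

/-- The complex-bilinear extension of a bracket on `L`, compressed by `cx`. -/
def cxBr (b : OrthonormalBasis (Fin p ⊕ Fin q) ℝ L) (br : L →ₗ[ℝ] L →ₗ[ℝ] L) :
    EuclideanSpace ℂ (Fin p) →ₗ[ℂ] EuclideanSpace ℂ (Fin p) →ₗ[ℂ] EuclideanSpace ℂ (Fin p) :=
  (EuclideanSpace.basisFun (Fin p) ℂ).toBasis.constr ℂ fun i => cxOp b (br (b (Sum.inl i)))

variable (b : OrthonormalBasis (Fin p ⊕ Fin q) ℝ L) {N : Submodule ℝ L}

@[simp] theorem cx_apply (x : L) (i : Fin p) : cx b x i = ((⟪b (Sum.inl i), x⟫_ℝ : ℝ) : ℂ) := rfl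

theorem cx_basis (i : Fin p) : cx b (b (Sum.inl i)) = EuclideanSpace.basisFun (Fin p) ℂ i := by
  ext j
  have := orthonormal_iff_ite.mp b.orthonormal (Sum.inl j) (Sum.inl i)
  rw [cx_apply, this]
  by_cases hij : j = i <;> simp [hij]

theorem cx_eq_sum (x : L) :
    cx b x = ∑ i, ((⟪b (Sum.inl i), x⟫_ℝ : ℝ) : ℂ) • EuclideanSpace.basisFun (Fin p) ℂ i := by
  conv_lhs => rw [← (EuclideanSpace.basisFun (Fin p) ℂ).sum_repr (cx b x)]
  simp

theorem cxOp_basis (A : L →ₗ[ℝ] L) (i : Fin p) :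
    cxOp b A (EuclideanSpace.basisFun (Fin p) ℂ i) = cx b (A (b (Sum.inl i))) := by
  rw [cxOp, ← (EuclideanSpace.basisFun (Fin p) ℂ).coe_toBasis, Basis.constr_basis]

theorem cxBr_basis (br : L →ₗ[ℝ] L →ₗ[ℝ] L) (i : Fin p) :
    cxBr b br (EuclideanSpace.basisFun (Fin p) ℂ i) = cxOp b (br (b (Sum.inl i))) := by
  rw [cxBr, ← (EuclideanSpace.basisFun (Fin p) ℂ).coe_toBasis, Basis.constr_basis]

variable {b}

theorem eq_sum_inl (ha : ∀ α, b (Sum.inr α) ∈ Nᗮ) {x : L} (hx : x ∈ N) :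
    x = ∑ i, ⟪b (Sum.inl i), x⟫_ℝ • b (Sum.inl i) := by
  conv_lhs => rw [← b.sum_repr' x, Fintype.sum_sum_type]
  have : ∀ α, ⟪b (Sum.inr α), x⟫_ℝ = 0 := fun α => N.inner_left_of_mem_orthogonal hx (ha α)
  simp [this]

theorem eq_sum_inr (he : ∀ i, b (Sum.inl i) ∈ N) {x : L} (hx : x ∈ Nᗮ) :
    x = ∑ α, ⟪b (Sum.inr α), x⟫_ℝ • b (Sum.inr α) := by
  conv_lhs => rw [← b.sum_repr' x, Fintype.sum_sum_type]
  have : ∀ i, ⟪b (Sum.inl i), x⟫_ℝ = 0 := fun i => N.inner_right_of_mem_orthogonal (he i) hx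
  simp [this]

theorem cxOp_cx (ha : ∀ α, b (Sum.inr α) ∈ Nᗮ) (A : L →ₗ[ℝ] L) {x : L} (hx : x ∈ N) :
    cxOp b A (cx b x) = cx b (A x) := by
  conv_rhs => rw [eq_sum_inl ha hx]
  rw [cx_eq_sum]
  simp only [map_sum, map_smul, cxOp_basis]
  rfl

theorem cxBr_cx (ha : ∀ α, b (Sum.inr α) ∈ Nᗮ) (br : L →ₗ[ℝ] L →ₗ[ℝ] L) {x y : L} (hx : x ∈ N)
    (hy : y ∈ N) : cxBr b br (cx b x) (cx b y) = cx b (br x y) := by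
  conv_rhs => rw [eq_sum_inl ha hx]
  rw [cx_eq_sum]
  simp only [map_sum, map_smul, cxBr_basis, LinearMap.sum_apply, LinearMap.smul_apply,
    cxOp_cx ha _ hy]
  rfl

/-- A property stable under linear combinations holds everywhere as soon as it holds on the real
form. -/
theorem cx_induction (he : ∀ i, b (Sum.inl i) ∈ N) {P : EuclideanSpace ℂ (Fin p) → Prop}
    (h0 : P 0) (h : ∀ x ∈ N, P (cx b x)) (hadd : ∀ u v, P u → P v → P (u + v))
    (hsmul : ∀ (r : ℂ) u, P u → P (r • u)) (v : EuclideanSpace ℂ (Fin p)) : P v := by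
  rw [← (EuclideanSpace.basisFun (Fin p) ℂ).sum_repr v]
  refine Finset.sum_induction _ P hadd h0 fun i _ => hsmul _ _ ?_
  rw [← cx_basis b]
  exact h _ (he i)

theorem exists_re_im (he : ∀ i, b (Sum.inl i) ∈ N) (v : EuclideanSpace ℂ (Fin p)) :
    ∃ x ∈ N, ∃ y ∈ N, v = cx b x + Complex.I • cx b y := by
  refine ⟨∑ i, (v i).re • b (Sum.inl i), Submodule.sum_mem _ fun i _ => N.smul_mem _ (he i),
    ∑ i, (v i).im • b (Sum.inl i), Submodule.sum_mem _ fun i _ => N.smul_mem _ (he i), ?_⟩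
  have horth : ∀ i j, ⟪b (Sum.inl i), b (Sum.inl j)⟫_ℝ = if i = j then 1 else 0 := fun i j => by
    have := orthonormal_iff_ite.mp b.orthonormal (Sum.inl i) (Sum.inl j)
    rw [this]; simp
  ext i
  have hsum : ∀ f : Fin p → ℝ, ⟪b (Sum.inl i), ∑ j, f j • b (Sum.inl j)⟫_ℝ = f i := fun f => by
    simp only [inner_sum, inner_smul_right, horth]; simp
  simp only [PiLp.add_apply, PiLp.smul_apply, cx_apply, hsum, smul_eq_mul]
  rw [mul_comm, Complex.re_add_im]

theorem inner_cx (ha : ∀ α, b (Sum.inr α) ∈ Nᗮ) (x : L) {z : L} (hz : z ∈ N) :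
    ⟪cx b x, cx b z⟫_ℂ = ((⟪x, z⟫_ℝ : ℝ) : ℂ) := by
  conv_rhs => rw [eq_sum_inl ha hz]
  rw [PiLp.inner_apply, inner_sum, Complex.ofReal_sum]
  refine Finset.sum_congr rfl fun i _ => ?_
  rw [inner_smul_right, cx_apply, cx_apply, real_inner_comm x]
  simp

theorem norm_cx_le (x : L) : ‖cx b x‖ ^ 2 ≤ ‖x‖ ^ 2 := by
  rw [EuclideanSpace.norm_sq_eq, ← b.sum_sq_norm_inner_right x, Fintype.sum_sum_type]
  simp only [cx_apply, Complex.norm_real]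
  exact le_add_of_nonneg_right (Finset.sum_nonneg fun _ _ => sq_nonneg _)

theorem norm_cx (ha : ∀ α, b (Sum.inr α) ∈ Nᗮ) {x : L} (hx : x ∈ N) : ‖cx b x‖ ^ 2 = ‖x‖ ^ 2 := by
  have := inner_cx ha x hx
  rw [inner_self_eq_norm_sq_to_K, real_inner_self_eq_norm_sq] at this
  exact Complex.ofReal_injective (by simpa using this)

theorem norm_re_im (ha : ∀ α, b (Sum.inr α) ∈ Nᗮ) {x y : L} (hx : x ∈ N) (hy : y ∈ N) :
    ‖cx b x + Complex.I • cx b y‖ ^ 2 = ‖x‖ ^ 2 + ‖y‖ ^ 2 := by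
  rw [norm_add_sq (𝕜 := ℂ), norm_smul, inner_smul_right, inner_cx ha x hy, norm_cx ha hx, mul_pow,
    norm_cx ha hy]
  simp

theorem norm_inner_re_im (ha : ∀ α, b (Sum.inr α) ∈ Nᗮ) (x y : L) {z : L} (hz : z ∈ N) :
    ‖⟪cx b x + Complex.I • cx b y, cx b z⟫_ℂ‖ ^ 2 = ⟪x, z⟫_ℝ ^ 2 + ⟪y, z⟫_ℝ ^ 2 := by
  rw [inner_add_left, inner_smul_left, inner_cx ha x hz, inner_cx ha y hz, ← Complex.normSq_eq_norm_sq,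
    Complex.normSq_apply]
  simp
  ring

variable {br : L →ₗ[ℝ] L →ₗ[ℝ] L} {H : L} {B R : L →ₗ[ℝ] L} {c : ℝ}

theorem isDer_cx (he : ∀ i, b (Sum.inl i) ∈ N)
    {D : EuclideanSpace ℂ (Fin p) →ₗ[ℂ] EuclideanSpace ℂ (Fin p)}
    (h : ∀ x ∈ N, ∀ y ∈ N, D (cxBr b br (cx b x) (cx b y)) =
      cxBr b br (D (cx b x)) (cx b y) + cxBr b br (cx b x) (D (cx b y))) :
    IsDer (cxBr b br) D := by
  intro v w
  induction v using cx_induction he with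
  | h0 => simp
  | hadd u v hu hv => simp only [map_add, LinearMap.add_apply, hu, hv]; abel
  | hsmul r u hu => simp only [map_smul, LinearMap.smul_apply, hu, smul_add]
  | h x hx =>
    induction w using cx_induction he with
    | h0 => simp
    | hadd u v hu hv => simp only [map_add, hu, hv]; abel
    | hsmul r u hu => simp only [map_smul, hu, smul_add]
    | h y hy => exact h x hx y hy

theorem EinAlg.isDer_cxOp (h : EinAlg br N H B R c) (he : ∀ i, b (Sum.inl i) ∈ N)
    (ha : ∀ α, b (Sum.inr α) ∈ Nᗮ) (z : L) : IsDer (cxBr b br) (cxOp b (br z)) := by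
  refine isDer_cx he fun x hx y hy => ?_
  rw [cxBr_cx ha br hx hy, cxOp_cx ha _ (h.br_mem _ _), cxOp_cx ha _ hx, cxOp_cx ha _ hy,
    cxBr_cx ha br (h.br_mem _ _) hy, cxBr_cx ha br hx (h.br_mem _ _), h.der, map_add]

/-- The complexified derived ideal is nilpotent. -/
theorem EinAlg.lcs_le (h : EinAlg br N H B R c) (he : ∀ i, b (Sum.inl i) ∈ N)
    (ha : ∀ α, b (Sum.inr α) ∈ Nᗮ) : ∃ k, lcs (cxBr b br) k = ⊥ := by
  obtain ⟨C, h0, ⟨K, hK⟩, -, hC'⟩ := exists_chain br h.skew h.jacobi h.solv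
  have key : ∀ k, lcs (cxBr b br) k ≤ Submodule.span ℂ (cx b '' {x | x ∈ C k ∧ x ∈ N}) := by
    intro k
    induction k with
    | zero =>
      intro v _
      induction v using cx_induction he with
      | h0 => exact Submodule.zero_mem _
      | hadd u v hu hv => exact Submodule.add_mem _ (hu trivial) (hv trivial)
      | hsmul r u hu => exact Submodule.smul_mem _ _ (hu trivial)
      | h x hx => exact Submodule.subset_span ⟨x, ⟨h0 ▸ trivial, hx⟩, rfl⟩
    | succ k ih =>
      refine Submodule.span_le.mpr ?_
      rintro _ ⟨x, y, hy, rfl⟩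
      have hy' := ih hy
      rw [SetLike.mem_coe]
      induction x using cx_induction he with
      | h0 => simp
      | hadd u v hu hv => rw [map_add, LinearMap.add_apply]; exact Submodule.add_mem _ hu hv
      | hsmul r u hu => rw [map_smul, LinearMap.smul_apply]; exact Submodule.smul_mem _ _ hu
      | h x hx =>
        have h2 : Submodule.span ℂ (cx b '' {x | x ∈ C k ∧ x ∈ N}) ≤
            (Submodule.span ℂ (cx b '' {x | x ∈ C (k + 1) ∧ x ∈ N})).comap
              (cxBr b br (cx b x)) := by
          refine Submodule.span_le.mpr ?_
          rintro _ ⟨z, ⟨hz, hz'⟩, rfl⟩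
          rw [SetLike.mem_coe, Submodule.mem_comap, cxBr_cx ha br hx hz']
          exact Submodule.subset_span ⟨_, ⟨hC' k x (h.hn ▸ hx) z hz, h.br_mem _ _⟩, rfl⟩
        exact h2 hy'
  refine ⟨K, eq_bot_iff.mpr ((key K).trans (Submodule.span_le.mpr ?_))⟩
  rintro _ ⟨x, ⟨hx, -⟩, rfl⟩
  rw [hK, Submodule.mem_bot] at hx
  simp [hx]

/-- The Einstein equation on the complexified derived ideal. The forms involved are Hermitian
extensions of real ones, so they split over real and imaginary parts. -/
theorem EinAlg.rho_eq (h : EinAlg br N H B R c) (he : ∀ i, b (Sum.inl i) ∈ N)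
    (ha : ∀ α, b (Sum.inr α) ∈ Nᗮ) (v : EuclideanSpace ℂ (Fin p)) :
    rho (cxBr b br) (fun α => cxOp b (br (b (Sum.inr α))))
      (fun α β => cx b (br (b (Sum.inr α)) (b (Sum.inr β)))) (EuclideanSpace.basisFun (Fin p) ℂ) v =
      c * ‖v‖ ^ 2 + (⟪v, cxOp b (br H) v⟫_ℂ).re := by
  obtain ⟨x, hx, y, hy, rfl⟩ := exists_re_im he v
  have hT : (⟪cx b x + Complex.I • cx b y, cxOp b (br H) (cx b x + Complex.I • cx b y)⟫_ℂ).re =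
      ⟪x, br H x⟫_ℝ + ⟪y, br H y⟫_ℝ := by
    rw [map_add, map_smul, cxOp_cx ha _ hx, cxOp_cx ha _ hy]
    simp only [inner_add_left, inner_add_right, inner_smul_left, inner_smul_right,
      inner_cx ha _ (h.br_mem _ _)]
    simp
  have hx' := h.ricci_ideal b hx
  have hy' := h.ricci_ideal b hy
  rw [hT, norm_re_im ha hx hy]
  simp only [rho, ← cx_basis b, map_add, map_smul, LinearMap.add_apply, LinearMap.smul_apply,
    cxOp_cx ha _ hx, cxOp_cx ha _ hy, cxOp_cx ha _ (he _), cxBr_cx ha br hx (he _),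
    cxBr_cx ha br hy (he _), cxBr_cx ha br (he _) (he _), norm_inner_re_im ha _ _ (h.br_mem _ _),
    norm_re_im ha (h.br_mem _ _) (h.br_mem _ _), Finset.sum_add_distrib]
  linarith

/-- The trace identity for `ad H` gives an inequality after restricting to the derived ideal, as the
remaining part of the norm of the symmetric part is nonnegative. -/
theorem EinAlg.hs_le (h : EinAlg br N H B R c) (he : ∀ i, b (Sum.inl i) ∈ N)
    (ha : ∀ α, b (Sum.inr α) ∈ Nᗮ) :
    hs (EuclideanSpace.basisFun (Fin p) ℂ)
      ((1/2 : ℂ) • (cxOp b (br H) + LinearMap.adjoint (cxOp b (br H)))) ≤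
      -c * (LinearMap.trace ℂ _ (cxOp b (br H))).re := by
  have hadj : ∀ j, LinearMap.adjoint (cxOp b (br H)) (EuclideanSpace.basisFun (Fin p) ℂ j) =
      cx b (LinearMap.adjoint (br H) (b (Sum.inl j))) := by
    intro j
    ext k
    have h1 : ∀ w : EuclideanSpace ℂ (Fin p), w k = ⟪EuclideanSpace.basisFun (Fin p) ℂ k, w⟫_ℂ := by
      intro w; rw [EuclideanSpace.basisFun_apply, EuclideanSpace.inner_single_left]; simp
    rw [h1, LinearMap.adjoint_inner_right, cxOp_basis, ← cx_basis b, inner_cx ha _ (he j), cx_apply,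
      LinearMap.adjoint_inner_right]
  have hsym : ∀ j, ((1/2 : ℂ) • (cxOp b (br H) + LinearMap.adjoint (cxOp b (br H))))
      (EuclideanSpace.basisFun (Fin p) ℂ j) =
      cx b (((1/2 : ℝ) • (br H + LinearMap.adjoint (br H))) (b (Sum.inl j))) := by
    intro j
    rw [LinearMap.smul_apply, LinearMap.add_apply, hadj, cxOp_basis, LinearMap.smul_apply,
      LinearMap.add_apply, map_smul, map_add]
    ext k
    simp
  have htr : (LinearMap.trace ℂ _ (cxOp b (br H))).re =
      ∑ i, ⟪b i, br H (b i)⟫_ℝ := by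
    have h0 : ∀ α, ⟪b (Sum.inr α), br H (b (Sum.inr α))⟫_ℝ = 0 := fun α =>
      N.inner_left_of_mem_orthogonal (h.br_mem _ _) (ha α)
    rw [LinearMap.trace_eq_sum_inner _ (EuclideanSpace.basisFun (Fin p) ℂ), Fintype.sum_sum_type]
    simp only [h0, Finset.sum_const_zero, add_zero, ← cx_basis b, cxOp_cx ha _ (he _),
      inner_cx ha _ (h.br_mem _ _), ← Complex.ofReal_sum, Complex.ofReal_re]
  rw [htr, ← h.trace_sym b, Fintype.sum_sum_type]
  refine le_trans ?_ (le_add_of_nonneg_right (Finset.sum_nonneg fun _ _ => sq_nonneg _))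
  refine Finset.sum_le_sum fun j _ => ?_
  rw [hsym]
  exact norm_cx_le _

/-- The complexified derived ideal of an Einstein algebra with negative Einstein constant. -/
theorem EinAlg.einData (h : EinAlg br N H B R c) (he : ∀ i, b (Sum.inl i) ∈ N)
    (ha : ∀ α, b (Sum.inr α) ∈ Nᗮ) (hc : c < 0) :
    EinData (cxBr b br) (fun α => cxOp b (br (b (Sum.inr α))))
      (fun α β => cx b (br (b (Sum.inr α)) (b (Sum.inr β)))) (cxOp b (br H)) (-c) p where
  dim := by simp
  skew v w := by
    induction v using cx_induction he with
    | h0 => simp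
    | hadd u v hu hv => simp only [map_add, LinearMap.add_apply, hu, hv]; abel
    | hsmul r u hu => simp only [map_smul, LinearMap.smul_apply, hu, smul_neg]
    | h x hx =>
      induction w using cx_induction he with
      | h0 => simp
      | hadd u v hu hv => simp only [map_add, LinearMap.add_apply, hu, hv]; abel
      | hsmul r u hu => simp only [map_smul, LinearMap.smul_apply, hu, smul_neg]
      | h y hy => rw [cxBr_cx ha br hx hy, cxBr_cx ha br hy hx, h.skew, map_neg]
  derμ v := by
    induction v using cx_induction he with
    | h0 => intro x y; simp
    | hadd u v hu hv =>
      intro x y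
      simp only [map_add, LinearMap.add_apply, hu x y, hv x y]; abel
    | hsmul r u hu =>
      intro x y
      simp only [map_smul, LinearMap.smul_apply, hu x y, smul_add]
    | h x hx =>
      refine isDer_cx he fun y hy z hz => ?_
      rw [cxBr_cx ha br hy hz, cxBr_cx ha br hx (h.br_mem _ _), cxBr_cx ha br hx hy,
        cxBr_cx ha br hx hz, cxBr_cx ha br (h.br_mem _ _) hz, cxBr_cx ha br hy (h.br_mem _ _),
        h.der, map_add]
  derD α := h.isDer_cxOp he ha _
  derT := h.isDer_cxOp he ha _
  comm α β v := by
    induction v using cx_induction he with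
    | h0 => simp
    | hadd u v hu hv => simp only [map_add, ← hu, ← hv]; abel
    | hsmul r u hu => simp only [map_smul, ← hu, smul_sub]
    | h x hx =>
      rw [cxOp_cx ha _ hx, cxOp_cx ha _ hx, cxOp_cx ha _ (h.br_mem _ _),
        cxOp_cx ha _ (h.br_mem _ _), cxBr_cx ha br (h.br_mem _ _) hx, ← map_sub, h.der]
      simp
  nilp := h.lcs_le he ha
  pos := by linarith
  ricci b' v := by
    rw [rho_indep _ _ _ b' (EuclideanSpace.basisFun (Fin p) ℂ), h.rho_eq he ha, neg_neg]
  trace_le b' := by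
    rw [hs_indep b' (EuclideanSpace.basisFun (Fin p) ℂ)]
    exact h.hs_le he ha

theorem EinAlg.abelian_of_neg (h : EinAlg br N H B R c) (hc : c < 0) :
    ∀ x ∈ Nᗮ, ∀ y ∈ Nᗮ, br x y = 0 := by
  obtain ⟨p, q, b, he, ha⟩ := exists_split_basis N
  have key : ∀ α β, br (b (Sum.inr α)) (b (Sum.inr β)) = 0 := by
    intro α β
    have h1 : cx b (br (b (Sum.inr α)) (b (Sum.inr β))) = 0 :=
      (h.einData he ha hc).lam_eq_zero α β
    have h2 := norm_cx ha (h.br_mem (b (Sum.inr α)) (b (Sum.inr β)))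
    rw [h1] at h2
    simpa using h2.symm
  intro x hx y hy
  rw [eq_sum_inr he hx, eq_sum_inr he hy]
  simp [LinearMap.sum_apply, key]

end Complexify

end EinSolv

/-- **Any Einstein solvmanifold is standard.**
Let (𝔰,⟨·,·⟩) be the metric Lie algebra of a solvmanifold: a finite-dimensional real solvable
Lie algebra (here `L` with bracket `br`) with an inner product.  Let 𝔫 = [𝔰,𝔰] and 𝔞 = 𝔫^⊥.
Let H ∈ 𝔞 be the mean curvature vector (⟨H,A⟩ = tr(ad A) for all A ∈ 𝔞), B the symmetric
operator of the Killing form (⟨Bx,y⟩ = tr(ad x ∘ ad y)), and R the symmetric operator given by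
⟨Rx,y⟩ = −½Σ⟨[x,xᵢ],xⱼ⟩⟨[y,xᵢ],xⱼ⟩ + ¼Σ⟨[xᵢ,xⱼ],x⟩⟨[xᵢ,xⱼ],y⟩ in any orthonormal basis {xᵢ}.
If the Ricci operator Ric = R − ½B − S(ad H) equals c·I for some c ∈ ℝ, then [𝔞,𝔞] = 0, i.e.
the solvmanifold is standard. -/
theorem einstein_solvmanifold_is_standard
    (br : L →ₗ[ℝ] L →ₗ[ℝ] L)
    (hskew : ∀ x y : L, br x y = - br y x)
    (hjacobi : ∀ x y z : L, br (br x y) z + br (br y z) x + br (br z x) y = 0)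
    (hsolv : ∃ k, derSeries br k = ⊥)
    (𝔫 : Submodule ℝ L) (h𝔫 : 𝔫 = bracketSpan br ⊤ ⊤)
    (H : L) (hH : H ∈ 𝔫ᗮ)
    (hHmean : ∀ A ∈ 𝔫ᗮ, ⟪H, A⟫_ℝ = LinearMap.trace ℝ L (br A))
    (B : L →ₗ[ℝ] L)
    (hB : ∀ x y : L, ⟪B x, y⟫_ℝ = LinearMap.trace ℝ L (br x ∘ₗ br y))
    (R : L →ₗ[ℝ] L)
    (hR : ∀ {ι : Type} [Fintype ι] (b : OrthonormalBasis ι ℝ L) (x y : L),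
      ⟪R x, y⟫_ℝ =
        -(1/2 : ℝ) * ∑ i, ∑ j, ⟪br x (b i), b j⟫_ℝ * ⟪br y (b i), b j⟫_ℝ
          + (1/4 : ℝ) * ∑ i, ∑ j, ⟪br (b i) (b j), x⟫_ℝ * ⟪br (b i) (b j), y⟫_ℝ)
    (c : ℝ)
    (heinstein : R - (1/2 : ℝ) • B - (1/2 : ℝ) • (br H + LinearMap.adjoint (br H))
      = c • (LinearMap.id : L →ₗ[ℝ] L)) :
    ∀ x ∈ 𝔫ᗮ, ∀ y ∈ 𝔫ᗮ, br x y = 0 := by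
  have h : EinSolv.EinAlg br 𝔫 H B R c :=
    ⟨hskew, hjacobi, hsolv, h𝔫, hH, hHmean, hB, hR, heinstein⟩
  rcases le_or_gt 0 c with hc | hc
  · exact h.abelian_of_nonneg hc
  · exact h.abelian_of_neg hc

end
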